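/- arXiv:2009.12441 — 4 statements merged into one kernel-verified Lean document; each statement's English description precedes it below -/
import Mathlib

section
/- There exist constants c_h > 0 and C_h > 0 depending only on h such that for every f ∈ S_h, with ρ = lim_{ω→∞} f(ω) and σ its spectral measure, one has c_h ‖f‖_{L²(0,1)} ≤ ρ + ‖σ‖_* ≤ C_h ‖f‖_{L²(0,1)}, where ‖σ‖_* = ∫₀^∞ dσ(λ)/(λ+1). -/
/-!
The kernel `(λ - (x + ih)²)⁻¹` has, for `x ∈ [0,1]` and `λ ≥ 0`, modulus at most `K / (λ + 1)`
(`lam_add_one_le`), because `|λ - (x+ih)²|² = (λ - x²)² + 2h²(λ + x²) + h⁴`. Integrating against `σ`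
bounds `f` uniformly on `(0,1)` by a multiple of `ρ + ‖σ‖_*`, which gives the lower estimate.

For the converse, the real part of the kernel is `(λ + h² - x²) / |λ - (x+ih)²|²`. When `x` stays
below `h/2` this is positive and at least a constant times `1 / (λ + 1)` (`le_re_kernel`), and `ρ ≥ 0`,
so there is no cancellation: `|f| ≥ Re f ≥ κ (ρ + ‖σ‖_*)` on `(0, m)` with `m = min(1,h)/2`.
The `L²` norm over `(0,1)` dominates the one over this subinterval.
-/


open MeasureTheory Complex Filter Set Topology Asymptotics

noncomputable section

/-- The open half-plane `ℍ_h = {ω : ℂ | Im ω > -h}`. -/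
def Hh (h : ℝ) : Set ℂ := {ω : ℂ | -h < ω.im}

/-- The Stieltjes-type integral `∫₀^∞ dσ(λ)/(λ - (ω+ih)²)`. -/
def sInt (h : ℝ) (σ : Measure ℝ) (ω : ℂ) : ℂ :=
  ∫ l in Ici (0:ℝ), ((l : ℂ) - (ω + I * (h:ℂ)) ^ 2)⁻¹ ∂σ

/-- Finiteness condition `∫₀^∞ dσ(λ)/(λ+1) < ∞`. -/
def FinCond (σ : Measure ℝ) : Prop :=
  (∫⁻ l in Ici (0:ℝ), ENNReal.ofReal (1 / (l + 1)) ∂σ) < ⊤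

/-- `‖σ‖_* = ∫₀^∞ dσ(λ)/(λ+1)`. -/
def starNorm (σ : Measure ℝ) : ℝ :=
  (∫⁻ l in Ici (0:ℝ), ENNReal.ofReal (1 / (l + 1)) ∂σ).toReal

/-- Membership in the class `S_h`: `f(ω) = ρ + ∫₀^∞ dσ(λ)/(λ - (ω+ih)²)` on `ℍ_h`
with `ρ ≥ 0` and `σ` a positive measure with `∫₀^∞ dσ(λ)/(λ+1) < ∞`. -/
def MemS (h : ℝ) (f : ℂ → ℂ) : Prop :=
  ∃ (ρ : ℝ) (σ : Measure ℝ), 0 ≤ ρ ∧ FinCond σ ∧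
    ∀ ω ∈ Hh h, f ω = (ρ : ℂ) + sInt h σ ω

/-- `L²(0,1)` norm of (the restriction to `(0,1)` of) `f`. -/
def L2norm01 (f : ℂ → ℂ) : ℝ := Real.sqrt (∫ x in Ioo (0:ℝ) 1, ‖f (x:ℂ)‖ ^ 2)

lemma normSq_kernel (h x l : ℝ) :
    normSq ((l : ℂ) - ((x : ℂ) + I * (h : ℂ)) ^ 2)
      = (l - x ^ 2) ^ 2 + 2 * h ^ 2 * (l + x ^ 2) + h ^ 4 := by
  simp [normSq_apply, pow_two]
  ring

lemma lam_add_one_le {h x l : ℝ} (hh : 0 < h) (hx0 : 0 ≤ x) (hx1 : x ≤ 1) (hl : 0 ≤ l) :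
    l + 1 ≤ 3 * (1 + 1 / h ^ 2) * ‖(l : ℂ) - ((x : ℂ) + I * (h : ℂ)) ^ 2‖ := by
  set N := ‖(l : ℂ) - ((x : ℂ) + I * (h : ℂ)) ^ 2‖ with hN
  have hN0 : 0 ≤ N := norm_nonneg _
  have hsq : N ^ 2 = (l - x ^ 2) ^ 2 + 2 * h ^ 2 * (l + x ^ 2) + h ^ 4 := by
    rw [hN, ← normSq_eq_norm_sq, normSq_kernel]
  have hx2 : x ^ 2 ≤ 1 := by nlinarith
  have hrest : 0 ≤ 2 * h ^ 2 * (l + x ^ 2) := by positivity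
  have h1 : h ^ 2 ≤ N := by
    refine le_of_abs_le (abs_le_of_sq_le_sq ?_ hN0)
    nlinarith [sq_nonneg (l - x ^ 2)]
  have h2 : l - x ^ 2 ≤ N := by
    refine le_of_abs_le (abs_le_of_sq_le_sq ?_ hN0)
    nlinarith [pow_pos hh 4]
  have h3 : 1 ≤ 1 / h ^ 2 * N := by
    rw [one_div, inv_mul_eq_div, le_div_iff₀ (by positivity)]
    linarith
  nlinarith

lemma norm_kernel_le {h x l : ℝ} (hh : 0 < h) (hx0 : 0 ≤ x) (hx1 : x ≤ 1) (hl : 0 ≤ l) :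
    ‖((l : ℂ) - ((x : ℂ) + I * (h : ℂ)) ^ 2)⁻¹‖ ≤ 3 * (1 + 1 / h ^ 2) * (1 / (l + 1)) := by
  have key := lam_add_one_le hh hx0 hx1 hl
  have hl1 : 0 < l + 1 := by linarith
  have hN : 0 < ‖(l : ℂ) - ((x : ℂ) + I * (h : ℂ)) ^ 2‖ :=
    pos_of_mul_pos_right (hl1.trans_le key) (by positivity)
  rw [norm_inv, mul_one_div, inv_eq_one_div, div_le_div_iff₀ hN hl1]
  linarith

/-- For `0 ≤ x ≤ h/2` the real part of the kernel is comparable to `1 / (λ + 1)` from below. -/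
lemma le_re_kernel {h x l : ℝ} (hh : 0 < h) (hx0 : 0 ≤ x) (hx1 : x ≤ h / 2) (hl : 0 ≤ l) :
    3 / (8 * (1 + h ^ 2)) * (1 / (l + 1))
      ≤ (((l : ℂ) - ((x : ℂ) + I * (h : ℂ)) ^ 2)⁻¹).re := by
  have hx2 : x ^ 2 ≤ h ^ 2 / 4 := by nlinarith
  have hh2 : 0 < h ^ 2 := by positivity
  have hre : ((l : ℂ) - ((x : ℂ) + I * (h : ℂ)) ^ 2).re = l - x ^ 2 + h ^ 2 := by
    simp [pow_two]
    ring
  rw [inv_re, normSq_kernel, hre]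
  have hD : 0 < (l - x ^ 2) ^ 2 + 2 * h ^ 2 * (l + x ^ 2) + h ^ 4 := by positivity
  -- `|λ - (x+ih)²|² ≤ 2 (λ + h²)²`, hence the intermediate bound `(3/8) / (λ + h²)`.
  have hD2 : (l - x ^ 2) ^ 2 + 2 * h ^ 2 * (l + x ^ 2) + h ^ 4 ≤ 2 * (l + h ^ 2) ^ 2 := by
    nlinarith [mul_nonneg hl (sq_nonneg x), mul_nonneg hl hh2.le, sq_nonneg x,
      mul_nonneg hh2.le (sub_nonneg.2 hx2), mul_nonneg (sq_nonneg x) (sub_nonneg.2 hx2)]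
  calc 3 / (8 * (1 + h ^ 2)) * (1 / (l + 1)) ≤ 3 / (8 * (l + h ^ 2)) := by
        rw [div_mul_div_comm, div_le_div_iff₀ (by positivity) (by positivity)]
        nlinarith [mul_nonneg hl hh2.le]
    _ ≤ _ := by
        rw [div_le_div_iff₀ (by positivity) hD]
        nlinarith [mul_nonneg (add_nonneg hl hh2.le) (show 0 ≤ l + h ^ 2 / 4 - x ^ 2 by linarith),
          mul_nonneg (add_nonneg hl hh2.le)
            (show 0 ≤ l - x ^ 2 + h ^ 2 - 3 / 4 * (l + h ^ 2) by linarith)]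

lemma integrable_weight {σ : Measure ℝ} (hσ : FinCond σ) :
    Integrable (fun l : ℝ => 1 / (l + 1)) (σ.restrict (Ici 0)) := by
  have hm : Measurable fun l : ℝ => 1 / (l + 1) := by fun_prop
  refine ⟨hm.aestronglyMeasurable, ?_⟩
  rw [hasFiniteIntegral_iff_ofReal]
  · exact hσ
  · filter_upwards [ae_restrict_mem measurableSet_Ici] with l hl
    have : (0 : ℝ) ≤ l := hl
    show (0 : ℝ) ≤ 1 / (l + 1)
    positivity

lemma integral_weight (σ : Measure ℝ) :
    ∫ l in Ici (0 : ℝ), 1 / (l + 1) ∂σ = starNorm σ := by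
  have hm : Measurable fun l : ℝ => 1 / (l + 1) := by fun_prop
  rw [starNorm, integral_eq_lintegral_of_nonneg_ae _ hm.aestronglyMeasurable]
  filter_upwards [ae_restrict_mem measurableSet_Ici] with l hl
  have : (0 : ℝ) ≤ l := hl
  show (0 : ℝ) ≤ 1 / (l + 1)
  positivity

lemma measurable_kernel (h x : ℝ) :
    Measurable fun l : ℝ => ((l : ℂ) - ((x : ℂ) + I * (h : ℂ)) ^ 2)⁻¹ := by
  fun_prop

lemma integrable_kernel {h x : ℝ} {σ : Measure ℝ} (hσ : FinCond σ) (hh : 0 < h)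
    (hx0 : 0 ≤ x) (hx1 : x ≤ 1) :
    Integrable (fun l : ℝ => ((l : ℂ) - ((x : ℂ) + I * (h : ℂ)) ^ 2)⁻¹)
      (σ.restrict (Ici 0)) := by
  refine ((integrable_weight hσ).const_mul (3 * (1 + 1 / h ^ 2))).mono'
    (measurable_kernel h x).aestronglyMeasurable ?_
  filter_upwards [ae_restrict_mem measurableSet_Ici] with l hl
  exact norm_kernel_le hh hx0 hx1 hl

lemma norm_sInt_le {h x : ℝ} {σ : Measure ℝ} (hσ : FinCond σ) (hh : 0 < h)
    (hx0 : 0 ≤ x) (hx1 : x ≤ 1) :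
    ‖sInt h σ x‖ ≤ 3 * (1 + 1 / h ^ 2) * starNorm σ := by
  rw [← integral_weight, ← integral_const_mul]
  refine norm_integral_le_of_norm_le ((integrable_weight hσ).const_mul _) ?_
  filter_upwards [ae_restrict_mem measurableSet_Ici] with l hl
  exact norm_kernel_le hh hx0 hx1 hl

lemma le_re_sInt {h x : ℝ} {σ : Measure ℝ} (hσ : FinCond σ) (hh : 0 < h)
    (hx0 : 0 ≤ x) (hx1 : x ≤ 1) (hxh : x ≤ h / 2) :
    3 / (8 * (1 + h ^ 2)) * starNorm σ ≤ (sInt h σ x).re := by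
  have hre : (sInt h σ x).re
      = ∫ l in Ici (0 : ℝ), (((l : ℂ) - ((x : ℂ) + I * (h : ℂ)) ^ 2)⁻¹).re ∂σ :=
    (integral_re (integrable_kernel hσ hh hx0 hx1)).symm
  rw [hre, ← integral_weight, ← integral_const_mul]
  refine integral_mono_ae ((integrable_weight hσ).const_mul _)
    (integrable_kernel hσ hh hx0 hx1).re ?_
  filter_upwards [ae_restrict_mem measurableSet_Ici] with l hl
  exact le_re_kernel hh hx0 hxh hl

lemma continuousOn_sInt {h : ℝ} {σ : Measure ℝ} (hσ : FinCond σ) (hh : 0 < h) :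
    ContinuousOn (fun x : ℝ => sInt h σ x) (Ioo 0 1) := by
  unfold sInt
  refine continuousOn_of_dominated (bound := fun l => 3 * (1 + 1 / h ^ 2) * (1 / (l + 1)))
    (fun x _ => (measurable_kernel h x).aestronglyMeasurable) (fun x hx => ?_)
    ((integrable_weight hσ).const_mul _) ?_
  · filter_upwards [ae_restrict_mem measurableSet_Ici] with l hl
    exact norm_kernel_le hh hx.1.le hx.2.le hl
  · filter_upwards [ae_restrict_mem measurableSet_Ici] with l hl
    refine ContinuousOn.inv₀ (by fun_prop) fun x hx h0 => ?_
    have key := lam_add_one_le hh hx.1.le hx.2.le hl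
    rw [h0, norm_zero, mul_zero] at key
    have : (0 : ℝ) ≤ l := hl
    linarith

/-- There exist constants `c_h, C_h > 0` depending only on `h` such that for
every `f ∈ S_h` with parameters `ρ = lim_{ω→∞} f(ω)` and spectral measure `σ`,
`c_h ‖f‖_{L²(0,1)} ≤ ρ + ‖σ‖_* ≤ C_h ‖f‖_{L²(0,1)}`. -/
theorem fundamental_estimate (h : ℝ) (hh : 0 < h) :
    ∃ c C : ℝ, 0 < c ∧ 0 < C ∧
      ∀ (ρ : ℝ) (σ : Measure ℝ), 0 ≤ ρ → FinCond σ →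
        c * L2norm01 (fun ω => (ρ : ℂ) + sInt h σ ω) ≤ ρ + starNorm σ ∧
        ρ + starNorm σ ≤ C * L2norm01 (fun ω => (ρ : ℂ) + sInt h σ ω) := by
  have hS (σ : Measure ℝ) : 0 ≤ starNorm σ := ENNReal.toReal_nonneg
  set K := 3 * (1 + 1 / h ^ 2) with hK
  have hp : 0 < 1 / h ^ 2 := by positivity
  have hK1 : 1 ≤ K := by rw [hK]; linarith
  set κ := 3 / (8 * (1 + h ^ 2)) with hκ
  have hκ0 : 0 < κ := by positivity
  have hκ1 : κ ≤ 1 := by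
    rw [hκ, div_le_one (by positivity)]
    nlinarith [sq_nonneg h]
  set m := min 1 h / 2 with hm
  have hm0 : 0 < m := by positivity
  have hm1 : m ≤ 1 := by have := min_le_left 1 h; rw [hm]; linarith
  have hmh : m ≤ h / 2 := by have := min_le_right 1 h; rw [hm]; linarith
  refine ⟨K⁻¹, (κ * √m)⁻¹, by positivity, by positivity, fun ρ σ hρ hσ => ?_⟩
  have hS0 := hS σ
  set F : ℝ → ℝ := fun x => ‖(ρ : ℂ) + sInt h σ (x : ℂ)‖ ^ 2 with hF
  have hup : ∀ x ∈ Ioo (0 : ℝ) 1, F x ≤ (K * (ρ + starNorm σ)) ^ 2 := fun x hx => by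
    refine pow_le_pow_left₀ (norm_nonneg _) ((norm_add_le _ _).trans ?_) 2
    have h1 : ‖sInt h σ x‖ ≤ K * starNorm σ := norm_sInt_le hσ hh hx.1.le hx.2.le
    rw [norm_real, Real.norm_of_nonneg hρ]
    nlinarith
  have hint : IntegrableOn F (Ioo 0 1) := by
    have hc : ContinuousOn F (Ioo 0 1) :=
      ((continuousOn_const.add (continuousOn_sInt hσ hh)).norm).pow 2
    refine Integrable.of_bound (hc.aestronglyMeasurable measurableSet_Ioo)
      ((K * (ρ + starNorm σ)) ^ 2) ?_
    filter_upwards [ae_restrict_mem measurableSet_Ioo] with x hx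
    rw [Real.norm_of_nonneg (sq_nonneg _)]
    exact hup x hx
  have hlow : ∀ x ∈ Ioo (0 : ℝ) m, (κ * (ρ + starNorm σ)) ^ 2 ≤ F x := fun x hx => by
    refine pow_le_pow_left₀ (by positivity) (le_trans ?_ (re_le_norm _)) 2
    have h1 : κ * starNorm σ ≤ (sInt h σ x).re :=
      le_re_sInt hσ hh hx.1.le (hx.2.le.trans hm1) (hx.2.le.trans hmh)
    rw [add_re, ofReal_re]
    nlinarith
  constructor
  · rw [inv_mul_le_iff₀ (by positivity)]
    refine Real.sqrt_le_iff.2 ⟨by positivity, ?_⟩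
    calc ∫ x in Ioo (0 : ℝ) 1, F x
        ≤ ∫ x in Ioo (0 : ℝ) 1, (K * (ρ + starNorm σ)) ^ 2 :=
          setIntegral_mono_on hint (integrableOn_const (by simp)) measurableSet_Ioo hup
      _ = (K * (ρ + starNorm σ)) ^ 2 := by simp
  · rw [le_inv_mul_iff₀ (by positivity)]
    refine Real.le_sqrt_of_sq_le ?_
    calc (κ * √m * (ρ + starNorm σ)) ^ 2 = ∫ x in Ioo (0 : ℝ) m, (κ * (ρ + starNorm σ)) ^ 2 := by
          rw [setIntegral_const, Real.volume_real_Ioo_of_le hm0.le, smul_eq_mul, mul_pow, mul_pow,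
            mul_pow, Real.sq_sqrt hm0.le]
          ring
      _ ≤ ∫ x in Ioo (0 : ℝ) m, F x :=
          setIntegral_mono_on (integrableOn_const (by simp)) (hint.mono_set (Ioo_subset_Ioo_right hm1))
            measurableSet_Ioo hlow
      _ ≤ ∫ x in Ioo (0 : ℝ) 1, F x :=
          setIntegral_mono_set hint (Eventually.of_forall fun x => sq_nonneg _)
            (Ioo_subset_Ioo_right hm1).eventuallyLE
end
end

section
/- The set S_h is closed in H(ℍ_h), the space of analytic functions on ℍ_h equipped with the topology of uniform convergence on compact subsets: if f_n ∈ S_h and f_n → f uniformly on every compact subset of ℍ_h, then f ∈ S_h. -/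
open MeasureTheory Complex Filter Set Topology Asymptotics

noncomputable section

/-!
A member of `S_h` is determined by a point mass at infinity (`ρ`) and a measure `dσ(λ)/(λ+1)` of
finite mass on `[0,∞)`. The substitution `t = 1/(λ+1)` compactifies `[0,∞]` to `[0,1]` and turns the
representation into `f(ω) = ∫ dμ(t) / (1 - t(1+(ω+ih)²))` with a finite measure `μ` on `[0,1]`;
conversely every finite `μ` gives a member of `S_h` (`exists_finiteMeasure`,
`memS_of_finiteMeasure`). The kernel is continuous in `t`, because `(ω+ih)² ∉ [0,∞)` for `ω ∈ ℍ_h`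
(`sKer_den_ne`).

Where `ω + ih = i` the kernel is `1`, so convergence of `f_n` at this one point bounds the masses of
the corresponding `μ_n`. Bounded sets of finite measures on a compact space are relatively compact
for the weak topology, and a weak cluster point of `(μ_n)` represents the limit `f`.
-/

/-- The point `(λ+1)⁻¹` of `[0,1]`, clamped so that it is defined for every real `λ`. -/
def toI (l : ℝ) : unitInterval := projIcc 0 1 zero_le_one (l + 1)⁻¹

/-- The kernel `1/(1 - t(1+(ω+ih)²))`. At `t = 1/(λ+1)` it is `(λ+1)/(λ - (ω+ih)²)`, and at
`t = 0`, which plays the role of `λ = ∞`, it is `1`. -/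
def sKer (h : ℝ) (ω : ℂ) (t : unitInterval) : ℂ :=
  (1 - ((t : ℝ) : ℂ) * (1 + (ω + I * (h : ℂ)) ^ 2))⁻¹

lemma toI_coe {l : ℝ} (hl : 0 ≤ l) : (toI l : ℝ) = (l + 1)⁻¹ := by
  rw [toI, projIcc_of_mem zero_le_one (⟨by positivity, inv_le_one_of_one_le₀ (by linarith)⟩ :
    (l + 1)⁻¹ ∈ Icc (0 : ℝ) 1)]

lemma measurable_toI : Measurable toI :=
  continuous_projIcc.measurable.comp (by fun_prop)

lemma sKer_den_ne {h : ℝ} {ω : ℂ} (hω : ω ∈ Hh h) (t : unitInterval) :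
    1 - ((t : ℝ) : ℂ) * (1 + (ω + I * (h : ℂ)) ^ 2) ≠ 0 := by
  have hω' : -h < ω.im := hω
  intro h0
  have hre := congrArg Complex.re h0
  have him := congrArg Complex.im h0
  simp [pow_two] at hre him
  have hb : 0 < ω.im + h := by linarith
  have h0t := t.2.1
  have h1t := t.2.2
  rcases him with ht | hr
  · rw [ht] at hre; simp at hre
  · have ha : ω.re = 0 := by
      have : ω.re * (ω.im + h) = 0 := by linarith
      exact (mul_eq_zero.mp this).resolve_right hb.ne'
    rw [ha] at hre
    have h2 : (t : ℝ) * (ω.im + h) ^ 2 = (t : ℝ) - 1 := by linarith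
    have h3 : 0 ≤ (t : ℝ) * (ω.im + h) ^ 2 := by positivity
    have h4 : (t : ℝ) = 1 := by linarith
    rw [h4] at h2
    nlinarith

lemma continuous_sKer {h : ℝ} {ω : ℂ} (hω : ω ∈ Hh h) : Continuous (sKer h ω) := by
  unfold sKer
  exact Continuous.inv₀ (by fun_prop) (sKer_den_ne hω)

lemma integrable_sKer {h : ℝ} {ω : ℂ} (hω : ω ∈ Hh h) (μ : Measure unitInterval)
    [IsFiniteMeasure μ] : Integrable (sKer h ω) μ :=
  (continuous_sKer hω).integrable_of_hasCompactSupport (HasCompactSupport.of_compactSpace _)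

lemma sKer_toI (h : ℝ) (ω : ℂ) {l : ℝ} (hl : 0 ≤ l) :
    (1 / (l + 1)) • sKer h ω (toI l) = ((l : ℂ) - (ω + I * (h : ℂ)) ^ 2)⁻¹ := by
  have h1 : ((l : ℂ) + 1) ≠ 0 := by
    have : (l + 1 : ℝ) ≠ 0 := by positivity
    exact_mod_cast this
  rw [sKer, toI_coe hl, Complex.real_smul]
  push_cast
  rw [one_div, ← mul_inv]
  congr 1
  field_simp
  ring

/-- A pair `(ρ, σ)` is encoded by one finite measure on `[0,1]`: the image of `dσ/(λ+1)` under
`λ ↦ 1/(λ+1)`, plus an atom of mass `ρ` at `0`. -/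
lemma exists_finiteMeasure {h ρ : ℝ} {σ : Measure ℝ} (hρ : 0 ≤ ρ) (hσ : FinCond σ) :
    ∃ μ : FiniteMeasure unitInterval, ∀ ω ∈ Hh h,
      (ρ : ℂ) + sInt h σ ω = ∫ t, sKer h ω t ∂(μ : Measure unitInterval) := by
  set τ : Measure ℝ := (σ.restrict (Ici 0)).withDensity (fun l => ENNReal.ofReal (1 / (l + 1)))
    with hτ
  have : IsFiniteMeasure τ := isFiniteMeasure_withDensity hσ.ne
  have : IsFiniteMeasure (ENNReal.ofReal ρ • Measure.dirac (0 : unitInterval)) :=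
    Measure.smul_finite _ ENNReal.ofReal_ne_top
  refine ⟨⟨τ.map toI + ENNReal.ofReal ρ • Measure.dirac 0, inferInstance⟩, fun ω hω => ?_⟩
  have hm : Measurable (fun l : ℝ => ENNReal.ofReal (1 / (l + 1))) := by fun_prop
  simp only [FiniteMeasure.toMeasure_mk]
  rw [integral_add_measure (integrable_sKer hω _) (integrable_sKer hω _),
    integral_map measurable_toI.aemeasurable (continuous_sKer hω).aestronglyMeasurable,
    integral_smul_measure, integral_dirac, hτ,
    integral_withDensity_eq_integral_toReal_smul hm (by simp), add_comm, sInt]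
  congr 1
  · refine setIntegral_congr_fun measurableSet_Ici fun l hl => ?_
    have hl : 0 ≤ l := hl
    rw [ENNReal.toReal_ofReal (by positivity), sKer_toI h ω hl]
  · simp [sKer, ENNReal.toReal_ofReal hρ]

/-- Every finite measure on `[0,1]` arises from such a pair: `ρ` is its atom at `0`, and `σ` is the
image of `dμ/t` on `(0,1]` under `t ↦ 1/t - 1`. -/
lemma memS_of_finiteMeasure {h : ℝ} {f : ℂ → ℂ} (μ : FiniteMeasure unitInterval)
    (hf : ∀ ω ∈ Hh h, f ω = ∫ t, sKer h ω t ∂(μ : Measure unitInterval)) : MemS h f := by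
  set m : Measure unitInterval := (μ : Measure unitInterval)
  set τ : Measure unitInterval :=
    (m.restrict {0}ᶜ).withDensity (fun t => ENNReal.ofReal ((t : ℝ)⁻¹)) with hτ
  have hm : Measurable (fun t : unitInterval => ENNReal.ofReal ((t : ℝ)⁻¹)) := by fun_prop
  set ψ : unitInterval → ℝ := fun t => (t : ℝ)⁻¹ - 1 with hψdef
  have hψ : Measurable ψ := by fun_prop
  have hpos : ∀ t : unitInterval, t ∈ ({0}ᶜ : Set unitInterval) → 0 < (t : ℝ) := fun t ht =>
    lt_of_le_of_ne t.2.1 fun h0 => ht (Subtype.ext h0.symm)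
  have hψ0 : ∀ t : unitInterval, t ∈ ({0}ᶜ : Set unitInterval) → 0 ≤ ψ t := fun t ht =>
    sub_nonneg.2 (one_le_inv_iff₀.2 ⟨hpos t ht, t.2.2⟩)
  have hinv : ∀ t : unitInterval, t ∈ ({0}ᶜ : Set unitInterval) → toI (ψ t) = t := fun t ht => by
    apply Subtype.ext
    rw [toI_coe (hψ0 t ht)]
    simp [hψdef]
  -- `σ` is carried by `[0,∞)`, so that restricting it to that set changes nothing.
  have hres : (τ.map ψ).restrict (Ici 0) = τ.map ψ := by
    apply Measure.restrict_eq_self_of_ae_mem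
    change ∀ᵐ l ∂τ.map ψ, l ∈ Ici (0 : ℝ)
    refine (ae_map_iff hψ.aemeasurable measurableSet_Ici).2 ?_
    refine (withDensity_absolutelyContinuous _ _).ae_le ?_
    exact (ae_restrict_iff' (measurableSet_singleton _).compl).2 (ae_of_all _ hψ0)
  refine ⟨m.real {0}, τ.map ψ, measureReal_nonneg, ?_, fun ω hω => ?_⟩
  · unfold FinCond
    rw [hres, lintegral_map (by fun_prop) hψ, hτ,
      lintegral_withDensity_eq_lintegral_mul _ hm (by fun_prop)]
    calc _ = ∫⁻ t in ({0}ᶜ : Set unitInterval), 1 ∂m := by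
          refine setLIntegral_congr_fun (measurableSet_singleton _).compl fun t ht => ?_
          have := hpos t ht
          simp only [Pi.mul_apply, hψdef]
          rw [← ENNReal.ofReal_mul (by positivity), ENNReal.ofReal_eq_one]
          simp [this.ne']
      _ < ⊤ := by simp
  · have hker : StronglyMeasurable (fun l : ℝ => ((l : ℂ) - (ω + I * (h : ℂ)) ^ 2)⁻¹) := by
      apply Measurable.stronglyMeasurable
      fun_prop
    rw [hf ω hω, sInt, hres, integral_map hψ.aemeasurable hker.aestronglyMeasurable, hτ,
      integral_withDensity_eq_integral_toReal_smul hm (by simp),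
      ← integral_add_compl (measurableSet_singleton (0 : unitInterval)) (integrable_sKer hω m)]
    congr 1
    · rw [integral_singleton]
      simp [sKer]
    · refine setIntegral_congr_fun (measurableSet_singleton _).compl fun t ht => ?_
      have := hpos t ht
      rw [ENNReal.toReal_ofReal (by positivity), ← sKer_toI h ω (hψ0 t ht), hinv t ht, smul_smul]
      simp [hψdef, this.ne']

/-- `S_h` is closed in `H(ℍ_h)`: if `f_n ∈ S_h` and `f_n → f` uniformly on
every compact subset of `ℍ_h`, then `f ∈ S_h`. -/
theorem Sh_closed (h : ℝ) (hh : 0 < h) (f : ℂ → ℂ) (F : ℕ → ℂ → ℂ)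
    (hF : ∀ n, MemS h (F n))
    (hconv : ∀ K ⊆ Hh h, IsCompact K → TendstoUniformlyOn F f atTop K) :
    MemS h f := by
  have hpt : ∀ ω ∈ Hh h, Tendsto (fun n => F n ω) atTop (𝓝 (f ω)) := fun ω hω =>
    (hconv {ω} (by simpa using hω) isCompact_singleton).tendsto_at rfl
  have hμ : ∀ n, ∃ μ : FiniteMeasure unitInterval, ∀ ω ∈ Hh h,
      F n ω = ∫ t, sKer h ω t ∂(μ : Measure unitInterval) := fun n => by
    obtain ⟨ρ, σ, hρ, hσ, hω⟩ := hF n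
    obtain ⟨μ, hμ⟩ := exists_finiteMeasure (h := h) hρ hσ
    exact ⟨μ, fun ω h' => (hω ω h').trans (hμ ω h')⟩
  choose μ hμ using hμ
  -- At `ω + ih = i` the kernel is identically `1`, so `F n` there is the total mass of `μ n`.
  set ω₀ : ℂ := I * (1 - h) with hω₀
  have hmem : ω₀ ∈ Hh h := by simp [Hh, hω₀]
  have hmass : ∀ n, F n ω₀ = ((μ n).mass : ℝ) := fun n => by
    have h1 : ∀ t, sKer h ω₀ t = 1 := fun t => by
      have : ω₀ + I * (h : ℂ) = I := by rw [hω₀]; ring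
      simp [sKer, this]
    rw [hμ n ω₀ hmem]
    simp only [h1]
    rw [integral_const, FiniteMeasure.measureReal_eq_coe_coeFn, Complex.real_smul, mul_one]
    rfl
  have hbd : ∀ᶠ n in atTop, (μ n).mass ≤ ‖f ω₀‖₊ + 1 := by
    have := (hpt ω₀ hmem).nnnorm.eventually_le_const (lt_add_one ‖f ω₀‖₊)
    filter_upwards [this] with n hn
    rw [hmass n] at hn
    simpa using hn
  -- An ultrafilter replaces the extraction of a weakly convergent subsequence.
  let U : Ultrafilter ℕ := hyperfilter ℕ
  have hU : (U : Filter ℕ) ≤ atTop := Nat.hyperfilter_le_atTop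
  obtain ⟨ν, -, hν⟩ := (isCompact_setOfPred_finiteMeasure_le_of_compactSpace unitInterval
    (‖f ω₀‖₊ + 1)).ultrafilter_le_nhds' (U.map μ) (hU hbd)
  have hν' : Tendsto μ U (𝓝 ν) := hν
  rw [FiniteMeasure.tendsto_iff_forall_integral_rclike_tendsto ℂ] at hν'
  refine memS_of_finiteMeasure ν fun ω hω => ?_
  refine tendsto_nhds_unique ((hpt ω hω).mono_left hU) ?_
  simp only [fun n => hμ n ω hω]
  exact hν' (BoundedContinuousFunction.mkOfCompact ⟨sKer h ω, continuous_sKer hω⟩)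
end
end

section
/- Every f ∈ S_h is the limit, uniformly on compact subsets of ℍ_h, of a sequence of functions in K_h; consequently the closure of K_h in H(ℍ_h) equals S_h. -/
/-!
Write `z = ω + i h`, so that `ω ∈ ℍ_h` means `Im z > 0`, and let `k_λ(z) = 1 / (λ - z²)`.

*Elements of `S_h` are limits of elements of `K_h`.* The transform of a nonzero finite measure on a
bounded interval `[0, M]` lies in `K_h`: the leading coefficient `A` is the total mass
(`memK_transform`). Given `f = ρ + ∫ k_λ dσ(λ)`, use the measures `σ|[0,n] + ρ n δ_n + δ_0 / (n+1)`.
Since `ρ n k_n → ρ` and `|k_λ| ≤ C / (λ + 1)` on compact sets, their transforms converge to `f`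
uniformly on compact sets (`MemS.exists_seq`); the last atom only keeps the measure nonzero.

*Limits of elements of `K_h` lie in `S_h`.* For `F ∈ K_h` and `ε > 0`, the function
`G(z) = F(z - i h + i ε)` is holomorphic across the real line and `O(z⁻²)` in the closed upper
half-plane. Cauchy's formula for `z`, and its vanishing counterpart for the reflected point `conj z`,
express `G` in the upper half-plane through `Im G` on the line; as `Im G` is odd there, this gives
`G(z) = ∫_0^∞ (2 t / π) Im G(t) / (t² - z²) dt` (`stieltjes_line`), a positive superposition of
kernels with `λ = t²`.

To pass to the limit, the half-line of `λ` is compactified by `s = 1 / (λ + 1) ∈ [0, 1]`. The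
normalised kernel `(λ + 1) k_λ(z)` becomes `1 / (1 - s (1 + z²))`, continuous on `[0, 1]`, and equal
to `1` at `z = i`. Hence the total masses of the representing measures are the values at `z = i`,
which converge and so are bounded. Weak compactness of bounded sets of measures on `[0, 1]` then
yields a representing measure for the limit (`exists_measure_of_tendsto`). With shifts `ε → 0` this
represents the limit function itself. The atom at `s = 0`, that is at `λ = ∞`, is the constant `ρ`,
and the remaining part gives `σ` (`memS_of_measure`).
-/

open MeasureTheory Complex Filter Set Topology Asymptotics

noncomputable section

/-- The filter of `ω → ∞` within `ℍ_h`. -/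
def atInftyIn (h : ℝ) : Filter ℂ := Filter.comap norm Filter.atTop ⊓ Filter.principal (Hh h)

/-- The plasma limit: `f(ω) = -A ω⁻² + O(ω⁻³)` as `ω → ∞` in `ℍ_h`, with `A > 0` supplied. -/
def PlasmaLimit (h : ℝ) (f : ℂ → ℂ) (A : ℝ) : Prop :=
  (fun ω => f ω + (A : ℂ) / ω ^ 2) =O[atInftyIn h] fun ω => ‖ω‖⁻¹ ^ 3

/-- Membership in the class `K_h`: analyticity, symmetry, passivity and the plasma limit. -/
def MemK (h : ℝ) (f : ℂ → ℂ) : Prop :=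
  DifferentiableOn ℂ f (Hh h) ∧
  (∀ ω ∈ Hh h, (starRingEnd ℂ) (f ω) = f (-(starRingEnd ℂ) ω)) ∧
  (∀ ω : ℂ, -h < ω.im → 0 < ω.re → 0 < (f ω).im) ∧
  (∃ A : ℝ, 0 < A ∧ PlasmaLimit h f A)

/-! ### Transforms of finite measures -/

/-- Factoring `l - z²` as `(√l - z) (√l + z)`, both factors have modulus at least `Im z`. -/
lemma sq_im_le_norm {z : ℂ} (hz : 0 < z.im) {l : ℝ} (hl : 0 ≤ l) :
    z.im ^ 2 ≤ ‖(l : ℂ) - z ^ 2‖ := by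
  have h1 : (l : ℂ) - z ^ 2 = ((√l : ℝ) - z) * ((√l : ℝ) + z) := by
    have : ((√l : ℝ) : ℂ) ^ 2 = l := by
      rw [← Complex.ofReal_pow, Real.sq_sqrt hl]
    rw [← this]; ring
  rw [h1, norm_mul, sq]
  have a := Complex.abs_im_le_norm ((√l : ℝ) - z)
  have b := Complex.abs_im_le_norm ((√l : ℝ) + z)
  simp only [sub_im, ofReal_im, zero_sub, abs_neg, add_im, zero_add, abs_of_pos hz] at a b
  exact mul_le_mul a b hz.le (norm_nonneg _)

lemma ker_ne_zero {z : ℂ} (hz : 0 < z.im) {l : ℝ} (hl : 0 ≤ l) : (l : ℂ) - z ^ 2 ≠ 0 := by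
  have := sq_im_le_norm hz hl
  rw [← norm_pos_iff]
  exact lt_of_lt_of_le (by positivity) this

lemma norm_ker_le {z : ℂ} (hz : 0 < z.im) {l : ℝ} (hl : 0 ≤ l) :
    ‖((l : ℂ) - z ^ 2)⁻¹‖ ≤ (z.im ^ 2)⁻¹ := by
  rw [norm_inv]
  exact inv_anti₀ (by positivity) (sq_im_le_norm hz hl)

/-- The kernel is comparable to `1 / (l + 1)`, with a constant that is locally bounded in the open
upper half-plane. -/
lemma norm_ker_le_div {z : ℂ} (hz : 0 < z.im) {l : ℝ} (hl : 0 ≤ l) :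
    ‖((l : ℂ) - z ^ 2)⁻¹‖ ≤ (1 + (1 + ‖z‖ ^ 2) / z.im ^ 2) * (1 / (l + 1)) := by
  have h0 := ker_ne_zero hz hl
  have h1 : ((l : ℂ) - z ^ 2)⁻¹ * ((l + 1 : ℝ) : ℂ) = 1 + (1 + z ^ 2) * ((l : ℂ) - z ^ 2)⁻¹ := by
    field_simp
    push_cast; ring
  have h2 : ‖((l : ℂ) - z ^ 2)⁻¹‖ * (l + 1) ≤ 1 + (1 + ‖z‖ ^ 2) / z.im ^ 2 := by
    have : ‖((l : ℂ) - z ^ 2)⁻¹‖ * (l + 1) = ‖((l : ℂ) - z ^ 2)⁻¹ * ((l + 1 : ℝ) : ℂ)‖ := by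
      rw [norm_mul, Complex.norm_real, Real.norm_of_nonneg (by linarith)]
    rw [this, h1]
    refine (norm_add_le _ _).trans ?_
    rw [norm_one, norm_mul, div_eq_mul_inv]
    gcongr
    · exact (norm_add_le _ _).trans (by simp)
    · exact norm_ker_le hz hl
  rw [mul_one_div, le_div_iff₀ (by linarith)]
  exact h2

lemma measurable_ker (z : ℂ) : Measurable fun l : ℝ => ((l : ℂ) - z ^ 2)⁻¹ :=
  (Complex.measurable_ofReal.sub_const _).inv

lemma integrable_ker {τ : Measure ℝ} [IsFiniteMeasure τ] (hτ : ∀ᵐ l ∂τ, 0 ≤ l) {z : ℂ}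
    (hz : 0 < z.im) : Integrable (fun l : ℝ => ((l : ℂ) - z ^ 2)⁻¹) τ :=
  Integrable.of_bound (measurable_ker z).aestronglyMeasurable ((z.im ^ 2)⁻¹)
    (hτ.mono fun _ hl => norm_ker_le hz hl)

lemma differentiableAt_transform {τ : Measure ℝ} [IsFiniteMeasure τ] (hτ : ∀ᵐ l ∂τ, 0 ≤ l)
    {z : ℂ} (hz : 0 < z.im) :
    DifferentiableAt ℂ (fun w : ℂ => ∫ l, ((l : ℂ) - w ^ 2)⁻¹ ∂τ) z := by
  have hs : {w : ℂ | z.im / 2 < w.im} ∩ Metric.ball z 1 ∈ 𝓝 z :=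
    Filter.inter_mem ((isOpen_lt continuous_const Complex.continuous_im).mem_nhds
      (show z.im / 2 < z.im by linarith)) (Metric.ball_mem_nhds _ one_pos)
  refine (hasDerivAt_integral_of_dominated_loc_of_deriv_le
    (F := fun w (l : ℝ) => ((l : ℂ) - w ^ 2)⁻¹)
    (F' := fun w (l : ℝ) => 2 * w * (((l : ℂ) - w ^ 2)⁻¹) ^ 2)
    (bound := fun _ => 2 * (‖z‖ + 1) * (((z.im / 2) ^ 2)⁻¹) ^ 2) hs
    (Eventually.of_forall fun w => (measurable_ker w).aestronglyMeasurable)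
    (integrable_ker hτ hz)
    ((measurable_ker z).pow_const 2 |>.const_mul _).aestronglyMeasurable
    ?_ (integrable_const _) ?_).2.differentiableAt
  · filter_upwards [hτ] with l hl w hw
    have h1 : z.im / 2 < w.im := hw.1
    have h2 : ‖w‖ ≤ ‖z‖ + 1 := by
      have := hw.2
      rw [Metric.mem_ball, dist_eq_norm] at this
      have h3 := norm_add_le (w - z) z
      rw [sub_add_cancel] at h3
      linarith
    have h3 : 0 < z.im / 2 := by linarith
    rw [norm_mul, norm_mul, norm_pow, Complex.norm_ofNat]
    gcongr
    refine (norm_ker_le (h3.trans h1) hl).trans ?_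
    gcongr
  · filter_upwards [hτ] with l hl w hw
    have h1 : z.im / 2 < w.im := hw.1
    have h0 := ker_ne_zero (z := w) (by linarith) hl
    have := (((hasDerivAt_id w).fun_pow 2).const_sub (l : ℂ)).fun_inv h0
    refine this.congr_deriv ?_
    simp
    field_simp

/-- Transforms of nonzero finite measures with support in `[0, M]` belong to `K_h`. -/
lemma memK_transform {h M : ℝ} (hh : 0 < h) (τ : Measure ℝ) [IsFiniteMeasure τ]
    (hτ : ∀ᵐ l ∂τ, l ∈ Icc 0 M) (hτ0 : τ ≠ 0) :
    MemK h (fun ω => ∫ l, ((l : ℂ) - (ω + I * (h : ℂ)) ^ 2)⁻¹ ∂τ) := by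
  have hτ' : ∀ᵐ l ∂τ, 0 ≤ l := hτ.mono fun _ hl => hl.1
  have him : ∀ ω : ℂ, ω ∈ Hh h → 0 < (ω + I * (h : ℂ)).im := by
    intro ω hω
    have : -h < ω.im := hω
    simp; linarith
  have hτpos : 0 < τ.real univ := by
    rw [Measure.real, ENNReal.toReal_pos_iff]
    exact ⟨by simpa [pos_iff_ne_zero] using hτ0, measure_lt_top _ _⟩
  refine ⟨?_, ?_, ?_, ?_⟩
  · intro ω hω
    have := differentiableAt_transform hτ' (him ω hω)
    exact (this.comp ω (by fun_prop : DifferentiableAt ℂ (fun ω : ℂ => ω + I * (h : ℂ)) ω)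
      ).differentiableWithinAt
  · intro ω hω
    beta_reduce
    rw [← integral_conj]
    refine integral_congr_ae (ae_of_all _ fun l => ?_)
    simp only [map_inv₀, map_sub, map_pow, map_add, map_mul, conj_I, conj_ofReal]
    congr 2
    ring
  · intro ω hω hre
    have hz := him ω hω
    rw [← RCLike.im_eq_complex_im, ← integral_im (integrable_ker hτ' hz)]
    refine (integral_pos_iff_support_of_nonneg_ae ?_ (integrable_ker hτ' hz).im).2 ?_
    · filter_upwards [hτ'] with l hl
      simp only [RCLike.im_eq_complex_im, inv_im, Pi.zero_apply]
      apply div_nonneg _ (normSq_nonneg _)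
      simp [sq] at hz ⊢
      nlinarith
    · have : ∀ᵐ l ∂τ, l ∈ Function.support
          fun l : ℝ => RCLike.im (((l : ℂ) - (ω + I * (h : ℂ)) ^ 2)⁻¹) := by
        filter_upwards [hτ'] with l hl
        simp only [Function.mem_support, RCLike.im_eq_complex_im, inv_im]
        refine div_ne_zero ?_ (normSq_pos.2 (ker_ne_zero hz hl)).ne'
        simp [sq] at hz ⊢
        nlinarith [mul_pos hre hz]
      refine lt_of_lt_of_eq ?_ (measure_congr (eventuallyEq_univ.2 this)).symm
      simpa [pos_iff_ne_zero] using hτ0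
  · refine ⟨τ.real univ, hτpos, ?_⟩
    set m := τ.real univ
    rw [PlasmaLimit, isBigO_iff]
    refine ⟨32 * |M| * m + 4 * m * (2 * h + h ^ 2), ?_⟩
    have hlarge : ∀ᶠ ω in atInftyIn h, 1 + 2 * h + 4 * |M| ≤ ‖ω‖ ∧ ω ∈ Hh h := by
      refine Filter.Eventually.and ?_ ?_
      · exact Filter.mem_inf_of_left (Filter.tendsto_comap.eventually (eventually_ge_atTop _))
      · exact Filter.mem_inf_of_right (Filter.mem_principal_self _)
    filter_upwards [hlarge] with ω ⟨hR, hω⟩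
    have hz := him ω hω
    set z := ω + I * (h : ℂ) with hzdef
    have hM := abs_nonneg M
    have hω1 : 1 ≤ ‖ω‖ := by linarith
    have hω0 : ω ≠ 0 := by rw [← norm_pos_iff]; linarith
    have hz0 : z ≠ 0 := by rintro h0; simp [h0] at hz
    have hzn : ‖ω‖ / 2 ≤ ‖z‖ := by
      have h3 := norm_sub_le z (I * (h : ℂ))
      have h4 : z - I * h = ω := by rw [hzdef]; ring
      rw [h4, norm_mul, norm_I, Complex.norm_real, Real.norm_of_nonneg hh.le] at h3
      linarith
    have hzsq : ‖ω‖ ^ 2 / 4 ≤ ‖z‖ ^ 2 := by nlinarith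
    -- The integral differs from `-m / z²` by a term of order `z⁻⁴`.
    have e1 : (∫ l, ((l : ℂ) - z ^ 2)⁻¹ ∂τ) + (m : ℂ) / z ^ 2
        = ∫ l, (l : ℂ) / (z ^ 2 * ((l : ℂ) - z ^ 2)) ∂τ := by
      have : (m : ℂ) / z ^ 2 = ∫ _, (1 / z ^ 2 : ℂ) ∂τ := by
        rw [integral_const, Complex.real_smul, mul_one_div]
      rw [this, ← integral_add (integrable_ker hτ' hz) (integrable_const _)]
      refine integral_congr_ae ?_
      filter_upwards [hτ'] with l hl
      have := ker_ne_zero hz hl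
      field_simp
      ring
    have e2 : ‖∫ l, (l : ℂ) / (z ^ 2 * ((l : ℂ) - z ^ 2)) ∂τ‖ ≤ 32 * |M| * m * ‖ω‖⁻¹ ^ 3 := by
      refine (norm_integral_le_of_norm_le_const (C := 32 * |M| * ‖ω‖⁻¹ ^ 3) ?_).trans
        (le_of_eq (by ring))
      filter_upwards [hτ] with l hl
      have hlM : |l| ≤ |M| := by rw [abs_of_nonneg hl.1]; exact hl.2.trans (le_abs_self M)
      have h5 : ‖ω‖ ^ 2 / 8 ≤ ‖(l : ℂ) - z ^ 2‖ := by
        have h3 := norm_sub_norm_le (z ^ 2) (l : ℂ)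
        rw [norm_sub_rev, norm_pow, Complex.norm_real, Real.norm_eq_abs] at h3
        nlinarith
      rw [norm_div, norm_mul, norm_pow, Complex.norm_real, Real.norm_eq_abs]
      have h7 := norm_pos_iff.2 (ker_ne_zero hz hl.1)
      rw [div_le_iff₀ (by positivity)]
      calc |l| ≤ |M| := hlM
        _ ≤ |M| * ‖ω‖ := le_mul_of_one_le_right hM hω1
        _ = 32 * |M| * ‖ω‖⁻¹ ^ 3 * (‖ω‖ ^ 2 / 4 * (‖ω‖ ^ 2 / 8)) := by
          field_simp
          ring
        _ ≤ _ := by gcongr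
    have e3 : ‖(m : ℂ) / ω ^ 2 - (m : ℂ) / z ^ 2‖ ≤ 4 * m * (2 * h + h ^ 2) * ‖ω‖⁻¹ ^ 3 := by
      have : (m : ℂ) / ω ^ 2 - (m : ℂ) / z ^ 2
          = m * (2 * ω * (I * h) + (I * h) ^ 2) / (ω ^ 2 * z ^ 2) := by
        field_simp
        rw [hzdef]; ring
      rw [this, norm_div, norm_mul, norm_mul, norm_pow, norm_pow, Complex.norm_real,
        Real.norm_of_nonneg hτpos.le]
      have h6 : ‖2 * ω * (I * h) + (I * h) ^ 2‖ ≤ (2 * h + h ^ 2) * ‖ω‖ := by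
        refine (norm_add_le _ _).trans ?_
        simp only [norm_mul, norm_pow, norm_I, Complex.norm_real, Complex.norm_ofNat,
          Real.norm_of_nonneg hh.le]
        nlinarith [sq_nonneg h]
      rw [div_le_iff₀ (by positivity)]
      calc m * ‖2 * ω * (I * h) + (I * h) ^ 2‖ ≤ m * ((2 * h + h ^ 2) * ‖ω‖) := by gcongr
        _ = 4 * m * (2 * h + h ^ 2) * ‖ω‖⁻¹ ^ 3 * (‖ω‖ ^ 2 * (‖ω‖ ^ 2 / 4)) := by
          field_simp
        _ ≤ _ := by gcongr
    have e4 : (∫ l, ((l : ℂ) - z ^ 2)⁻¹ ∂τ) + (m : ℂ) / ω ^ 2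
        = (∫ l, (l : ℂ) / (z ^ 2 * ((l : ℂ) - z ^ 2)) ∂τ)
          + ((m : ℂ) / ω ^ 2 - (m : ℂ) / z ^ 2) := by
      rw [← e1]; ring
    rw [e4]
    refine (norm_add_le _ _).trans ((add_le_add e2 e3).trans ?_)
    rw [norm_pow, norm_inv, norm_norm]
    exact le_of_eq (by ring)

/-! ### Approximation of elements of `S_h` -/

lemma ae_nonneg_Ici (σ : Measure ℝ) : ∀ᵐ l ∂(σ.restrict (Ici 0)), 0 ≤ l :=
  ae_restrict_mem measurableSet_Ici

lemma FinCond.integrable {σ : Measure ℝ} (hσ : FinCond σ) :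
    IntegrableOn (fun l : ℝ => 1 / (l + 1)) (Ici 0) σ := by
  refine ⟨(by measurability : Measurable fun l : ℝ => 1 / (l + 1)).aestronglyMeasurable, ?_⟩
  rw [hasFiniteIntegral_iff_ofReal]
  · exact hσ
  · filter_upwards [ae_nonneg_Ici σ] with l hl
    simp only [Pi.zero_apply]; positivity

lemma FinCond.integrable_ker {σ : Measure ℝ} (hσ : FinCond σ) {z : ℂ} (hz : 0 < z.im) :
    IntegrableOn (fun l : ℝ => ((l : ℂ) - z ^ 2)⁻¹) (Ici 0) σ := by
  refine Integrable.mono' (hσ.integrable.const_mul (1 + (1 + ‖z‖ ^ 2) / z.im ^ 2))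
    (measurable_ker z).aestronglyMeasurable ?_
  filter_upwards [ae_nonneg_Ici σ] with l hl
  exact norm_ker_le_div hz hl

lemma FinCond.measure_Icc_lt_top {σ : Measure ℝ} (hσ : FinCond σ) {M : ℝ} (hM : 0 ≤ M) :
    σ (Icc 0 M) < ⊤ := by
  have h1 : ENNReal.ofReal (1 / (M + 1)) * σ (Icc 0 M)
      ≤ ∫⁻ l in Ici (0:ℝ), ENNReal.ofReal (1 / (l + 1)) ∂σ := by
    rw [← setLIntegral_const]
    refine (setLIntegral_mono (by fun_prop) fun l hl => ?_).trans
      (lintegral_mono_set Icc_subset_Ici_self)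
    have := hl.1
    have := hl.2
    gcongr
  by_contra hcon
  rw [not_lt, top_le_iff] at hcon
  rw [hcon, ENNReal.mul_top (by simp; linarith)] at h1
  exact absurd hσ (by rw [FinCond, not_lt]; exact h1)

/-- On a compact subset of `ℍ_h` the kernel is bounded by a fixed multiple of `1 / (l + 1)`. -/
lemma exists_ker_bound {h : ℝ} {K : Set ℂ} (hKh : K ⊆ Hh h) (hK : IsCompact K) :
    ∃ C : ℝ, 0 ≤ C ∧ ∀ ω ∈ K, ‖ω + I * (h : ℂ)‖ ^ 2 ≤ C ∧ ∀ l : ℝ, 0 ≤ l →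
      ‖((l : ℂ) - (ω + I * (h : ℂ)) ^ 2)⁻¹‖ ≤ C * (1 / (l + 1)) := by
  have him : ∀ ω ∈ K, 0 < (ω + I * (h : ℂ)).im := by
    intro ω hω
    have : -h < ω.im := hKh hω
    simp; linarith
  have hcont : ContinuousOn (fun ω : ℂ =>
      1 + (1 + ‖ω + I * (h : ℂ)‖ ^ 2) / (ω + I * (h : ℂ)).im ^ 2) K := by
    refine ContinuousOn.add continuousOn_const (ContinuousOn.div ?_ ?_ fun ω hω => ?_)
    · fun_prop
    · exact ((Complex.continuous_im.comp (by fun_prop)).pow 2).continuousOn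
    · exact pow_ne_zero _ (him ω hω).ne'
  have hcont2 : ContinuousOn (fun ω : ℂ => ‖ω + I * (h : ℂ)‖ ^ 2) K := by fun_prop
  obtain ⟨C1, hC1⟩ := hK.exists_bound_of_continuousOn hcont
  obtain ⟨C2, hC2⟩ := hK.exists_bound_of_continuousOn hcont2
  refine ⟨max 0 (max C1 C2), le_max_left _ _, fun ω hω => ⟨?_, fun l hl => ?_⟩⟩
  · exact (Real.le_norm_self _).trans ((hC2 ω hω).trans
      ((le_max_right _ _).trans (le_max_right _ _)))
  · refine (norm_ker_le_div (him ω hω) hl).trans ?_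
    gcongr
    exact (Real.le_norm_self _).trans ((hC1 ω hω).trans
      ((le_max_left _ _).trans (le_max_right _ _)))

/-- The approximating measures: `σ` truncated to `[0, n]`, an atom `ρ n δ_n` whose transform
converges to the constant `ρ`, and a vanishing atom at `0` that keeps the measure nonzero. -/
def approxMeasure (ρ : ℝ) (σ : Measure ℝ) (n : ℕ) : Measure ℝ :=
  σ.restrict (Icc 0 (n : ℝ)) + (ENNReal.ofReal (ρ * n) • Measure.dirac (n : ℝ)
    + ENNReal.ofReal (1 / ((n : ℝ) + 1)) • Measure.dirac (0 : ℝ))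

lemma isFiniteMeasure_approx {ρ : ℝ} {σ : Measure ℝ} (hσ : FinCond σ) (n : ℕ) :
    IsFiniteMeasure (approxMeasure ρ σ n) := by
  have : IsFiniteMeasure (σ.restrict (Icc 0 (n : ℝ))) :=
    ⟨by rw [Measure.restrict_apply_univ]; exact hσ.measure_Icc_lt_top n.cast_nonneg⟩
  have h2 := Measure.smul_finite (Measure.dirac (n : ℝ)) (ENNReal.ofReal_ne_top (r := ρ * n))
  have h3 := Measure.smul_finite (Measure.dirac (0 : ℝ))
    (ENNReal.ofReal_ne_top (r := 1 / ((n : ℝ) + 1)))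
  unfold approxMeasure
  infer_instance

lemma ae_mem_approx (ρ : ℝ) (σ : Measure ℝ) (n : ℕ) :
    ∀ᵐ l ∂(approxMeasure ρ σ n), l ∈ Icc 0 (n : ℝ) := by
  unfold approxMeasure
  rw [ae_add_measure_iff, ae_add_measure_iff]
  refine ⟨ae_restrict_mem measurableSet_Icc, Measure.ae_smul_measure ?_ _,
    Measure.ae_smul_measure ?_ _⟩
  · exact (ae_dirac_iff (p := fun l => l ∈ Icc 0 (n : ℝ)) measurableSet_Icc).2 (by simp)
  · exact (ae_dirac_iff (p := fun l => l ∈ Icc 0 (n : ℝ)) measurableSet_Icc).2 (by simp)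

lemma approx_ne_zero (ρ : ℝ) (σ : Measure ℝ) (n : ℕ) : approxMeasure ρ σ n ≠ 0 := by
  intro h0
  have := congrArg (fun m : Measure ℝ => m {0}) h0
  simp [approxMeasure] at this
  have h1 := this.2.2
  linarith [n.cast_nonneg (α := ℝ)]

lemma integral_approx {ρ : ℝ} {σ : Measure ℝ} (hρ : 0 ≤ ρ) (hσ : FinCond σ) (n : ℕ) {z : ℂ}
    (hz : 0 < z.im) :
    ∫ l, ((l : ℂ) - z ^ 2)⁻¹ ∂(approxMeasure ρ σ n)
      = (∫ l in Icc 0 (n : ℝ), ((l : ℂ) - z ^ 2)⁻¹ ∂σ)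
        + ((ρ * n : ℝ) * (((n : ℝ) : ℂ) - z ^ 2)⁻¹
          + ((1 / ((n : ℝ) + 1) : ℝ) : ℂ) * (((0 : ℝ) : ℂ) - z ^ 2)⁻¹) := by
  have hfin := isFiniteMeasure_approx (ρ := ρ) hσ n
  have hintg : Integrable (fun l : ℝ => ((l : ℂ) - z ^ 2)⁻¹) (approxMeasure ρ σ n) :=
    integrable_ker ((ae_mem_approx ρ σ n).mono fun _ hl => hl.1) hz
  unfold approxMeasure at hintg ⊢
  obtain ⟨i1, i23⟩ := integrable_add_measure.1 hintg
  obtain ⟨i2, i3⟩ := integrable_add_measure.1 i23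
  rw [integral_add_measure i1 i23, integral_add_measure i2 i3, integral_smul_measure,
    integral_smul_measure, integral_dirac, integral_dirac,
    ENNReal.toReal_ofReal (by positivity), ENNReal.toReal_ofReal (by positivity),
    Complex.real_smul, Complex.real_smul]

lemma tendsto_tail {σ : Measure ℝ} (hσ : FinCond σ) :
    Tendsto (fun n : ℕ => ∫ l in Ioi (n : ℝ), 1 / (l + 1) ∂σ) atTop (𝓝 0) := by
  have h := tendsto_setIntegral_of_antitone (μ := σ) (f := fun l : ℝ => 1 / (l + 1))
    (s := fun n : ℕ => Ioi (n : ℝ)) (fun n => measurableSet_Ioi)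
    (fun m n hmn => Ioi_subset_Ioi (by exact_mod_cast hmn))
    ⟨0, hσ.integrable.mono_set (by simp)⟩
  have : (⋂ n : ℕ, Ioi (n : ℝ)) = ∅ := by
    ext x
    simp only [mem_iInter, mem_Ioi, mem_empty_iff_false, iff_false, not_forall, not_lt]
    exact exists_nat_ge x
  simpa [this] using h

/-- Every element of `S_h` is a locally uniform limit of elements of `K_h`. -/
lemma MemS.exists_seq {h : ℝ} (hh : 0 < h) {f : ℂ → ℂ} (hf : MemS h f) :
    ∃ F : ℕ → ℂ → ℂ, (∀ n, MemK h (F n)) ∧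
      ∀ K ⊆ Hh h, IsCompact K → TendstoUniformlyOn F f atTop K := by
  obtain ⟨ρ, σ, hρ, hσ, hf⟩ := hf
  refine ⟨fun n ω => ∫ l, ((l : ℂ) - (ω + I * (h : ℂ)) ^ 2)⁻¹ ∂(approxMeasure ρ σ n),
    fun n => ?_, fun K hKh hK => ?_⟩
  · have := isFiniteMeasure_approx (ρ := ρ) hσ n
    exact memK_transform hh _ (ae_mem_approx ρ σ n) (approx_ne_zero ρ σ n)
  obtain ⟨C, hC0, hC⟩ := exists_ker_bound hKh hK
  have hlim : Tendsto (fun n : ℕ => C * (∫ l in Ioi (n : ℝ), 1 / (l + 1) ∂σ)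
      + (ρ * C * C * (1 / ((n : ℝ) + 1)) + C * (1 / ((n : ℝ) + 1)))) atTop (𝓝 0) := by
    have h1 := (tendsto_tail hσ).const_mul C
    have h2 := tendsto_one_div_add_atTop_nhds_zero_nat (𝕜 := ℝ)
    simpa using h1.add ((h2.const_mul (ρ * C * C)).add (h2.const_mul C))
  rw [Metric.tendstoUniformlyOn_iff]
  intro ε hε
  filter_upwards [hlim.eventually (gt_mem_nhds hε)] with n hn ω hω
  refine lt_of_le_of_lt ?_ hn
  have hz : 0 < (ω + I * (h : ℂ)).im := by
    have : -h < ω.im := hKh hω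
    simp; linarith
  obtain ⟨hCz, hCk⟩ := hC ω hω
  rw [dist_eq_norm, hf ω (hKh hω), sInt, integral_approx hρ hσ n hz]
  set z := ω + I * (h : ℂ)
  have hn0 : (0 : ℝ) ≤ n := n.cast_nonneg
  have hsplit : ∫ l in Ici (0:ℝ), ((l : ℂ) - z ^ 2)⁻¹ ∂σ
      = (∫ l in Icc 0 (n : ℝ), ((l : ℂ) - z ^ 2)⁻¹ ∂σ)
        + ∫ l in Ioi (n : ℝ), ((l : ℂ) - z ^ 2)⁻¹ ∂σ := by
    rw [← Icc_union_Ioi_eq_Ici hn0]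
    refine setIntegral_union ?_ measurableSet_Ioi ?_ ?_
    · rw [Set.disjoint_left]
      intro l hl hl'
      exact absurd hl.2 (not_le.2 hl')
    · exact (hσ.integrable_ker hz).mono_set Icc_subset_Ici_self
    · exact (hσ.integrable_ker hz).mono_set fun l hl => hn0.trans (le_of_lt hl)
  have hne := ker_ne_zero hz hn0
  have hρz : (ρ : ℂ) - (ρ * n : ℝ) * (((n : ℝ) : ℂ) - z ^ 2)⁻¹
      = -(ρ * z ^ 2 * (((n : ℝ) : ℂ) - z ^ 2)⁻¹) := by
    field_simp
    push_cast
    ring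
  have key : (ρ : ℂ) + (∫ l in Ici (0:ℝ), ((l : ℂ) - z ^ 2)⁻¹ ∂σ)
      - ((∫ l in Icc 0 (n : ℝ), ((l : ℂ) - z ^ 2)⁻¹ ∂σ)
        + ((ρ * n : ℝ) * (((n : ℝ) : ℂ) - z ^ 2)⁻¹
          + ((1 / ((n : ℝ) + 1) : ℝ) : ℂ) * (((0 : ℝ) : ℂ) - z ^ 2)⁻¹))
      = (∫ l in Ioi (n : ℝ), ((l : ℂ) - z ^ 2)⁻¹ ∂σ)
        + (-(ρ * z ^ 2 * (((n : ℝ) : ℂ) - z ^ 2)⁻¹)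
          - ((1 / ((n : ℝ) + 1) : ℝ) : ℂ) * (((0 : ℝ) : ℂ) - z ^ 2)⁻¹) := by
    rw [← hρz, hsplit]; ring
  rw [key]
  refine (norm_add_le _ _).trans (add_le_add ?_ ((norm_sub_le _ _).trans (add_le_add ?_ ?_)))
  · rw [← integral_const_mul]
    refine norm_integral_le_of_norm_le ((hσ.integrable.mono_set
      fun l hl => hn0.trans (le_of_lt hl)).const_mul C) ?_
    filter_upwards [ae_restrict_mem measurableSet_Ioi] with l hl
    exact hCk l (hn0.trans (le_of_lt hl))
  · rw [norm_neg, norm_mul, norm_mul, norm_pow, Complex.norm_real, Real.norm_of_nonneg hρ]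
    calc ρ * ‖z‖ ^ 2 * ‖(((n : ℝ) : ℂ) - z ^ 2)⁻¹‖
        ≤ ρ * C * (C * (1 / ((n : ℝ) + 1))) := by
          gcongr
          exact hCk n hn0
      _ = _ := by ring
  · rw [norm_mul, Complex.norm_real, Real.norm_of_nonneg (by positivity), mul_comm C]
    gcongr
    simpa using hCk 0 le_rfl

/-! ### Cauchy's formula on a half-plane -/

/-- Quadratic decay near infinity upgrades to a bound on the whole closed half-plane, since the
remaining part is compact. -/
lemma exists_decay_bound {δ : ℝ} (hδ : 0 < δ) {G : ℂ → ℂ}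
    (hG : DifferentiableOn ℂ G {ζ | -δ < ζ.im}) {R C : ℝ}
    (hRC : ∀ ζ : ℂ, 0 ≤ ζ.im → R ≤ ‖ζ‖ → ‖G ζ‖ ≤ C / ‖ζ‖ ^ 2) :
    ∃ B : ℝ, 0 ≤ B ∧ ∀ ζ : ℂ, 0 ≤ ζ.im → ‖G ζ‖ ≤ B * (1 + ‖ζ‖ ^ 2)⁻¹ := by
  have hK : IsCompact (Metric.closedBall (0 : ℂ) (max R 1) ∩ {ζ : ℂ | 0 ≤ ζ.im}) :=
    (isCompact_closedBall _ _).inter_right (isClosed_le continuous_const Complex.continuous_im)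
  have hcont : ContinuousOn (fun ζ => ‖G ζ‖ * (1 + ‖ζ‖ ^ 2))
      (Metric.closedBall (0 : ℂ) (max R 1) ∩ {ζ : ℂ | 0 ≤ ζ.im}) := by
    refine ContinuousOn.mul (hG.continuousOn.mono ?_).norm (by fun_prop)
    intro ζ hζ
    have : 0 ≤ ζ.im := hζ.2
    show -δ < ζ.im
    linarith
  obtain ⟨B, hB⟩ := hK.exists_bound_of_continuousOn hcont
  refine ⟨max (2 * |C|) B, le_max_of_le_left (by positivity), fun ζ hζ => ?_⟩
  rw [← div_eq_mul_inv, le_div_iff₀ (by positivity)]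
  by_cases hle : ‖ζ‖ ≤ max R 1
  · exact (Real.le_norm_self _).trans ((hB ζ ⟨by simpa using hle, hζ⟩).trans (le_max_right _ _))
  · push Not at hle
    have h1 : R ≤ ‖ζ‖ := (le_max_left _ _).trans hle.le
    have h2 : 1 ≤ ‖ζ‖ := (le_max_right _ _).trans hle.le
    refine le_trans ?_ (le_max_left _ _)
    calc ‖G ζ‖ * (1 + ‖ζ‖ ^ 2) ≤ |C| / ‖ζ‖ ^ 2 * (2 * ‖ζ‖ ^ 2) := by
          gcongr
          · exact (hRC ζ hζ h1).trans (by gcongr; exact le_abs_self C)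
          · nlinarith
      _ = 2 * |C| := by field_simp

lemma continuous_line {δ : ℝ} (hδ : 0 < δ) {G : ℂ → ℂ}
    (hG : DifferentiableOn ℂ G {ζ | -δ < ζ.im}) : Continuous fun t : ℝ => G t := by
  refine hG.continuousOn.comp_continuous Complex.continuous_ofReal fun t => ?_
  show -δ < (t : ℂ).im
  simpa using hδ

lemma integrable_line {δ : ℝ} (hδ : 0 < δ) {G : ℂ → ℂ}
    (hG : DifferentiableOn ℂ G {ζ | -δ < ζ.im}) {B : ℝ}
    (hB : ∀ ζ : ℂ, 0 ≤ ζ.im → ‖G ζ‖ ≤ B * (1 + ‖ζ‖ ^ 2)⁻¹) :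
    Integrable fun t : ℝ => G t := by
  refine Integrable.mono' (integrable_inv_one_add_sq.const_mul B)
    (continuous_line hδ hG).aestronglyMeasurable (ae_of_all _ fun t => ?_)
  simpa using hB t (by simp)

/-- Cauchy's theorem on a half-plane: the integral over the real line of a function that is
holomorphic near the closed upper half-plane and `O(ζ⁻²)` there vanishes. -/
lemma integral_line_eq_zero {δ : ℝ} (hδ : 0 < δ) {G : ℂ → ℂ}
    (hG : DifferentiableOn ℂ G {ζ | -δ < ζ.im}) {B : ℝ}
    (hB : ∀ ζ : ℂ, 0 ≤ ζ.im → ‖G ζ‖ ≤ B * (1 + ‖ζ‖ ^ 2)⁻¹) :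
    ∫ t : ℝ, G t = 0 := by
  have hB0 : 0 ≤ B := by
    have := (norm_nonneg _).trans (hB 0 (by simp))
    simpa using this
  have hintg := integrable_line hδ hG hB
  have h1 : Tendsto (fun n : ℕ => ∫ t in (-(n : ℝ))..(n : ℝ), G t) atTop (𝓝 (∫ t : ℝ, G t)) :=
    intervalIntegral_tendsto_integral hintg
      (tendsto_neg_atTop_atBot.comp tendsto_natCast_atTop_atTop) tendsto_natCast_atTop_atTop
  refine tendsto_nhds_unique h1 ?_
  rw [tendsto_zero_iff_norm_tendsto_zero]
  have hlim : Tendsto (fun n : ℕ => 4 * B * (1 / (n : ℝ))) atTop (𝓝 0) := by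
    simpa using (tendsto_one_div_atTop_nhds_zero_nat (𝕜 := ℝ)).const_mul (4 * B)
  refine tendsto_of_tendsto_of_tendsto_of_le_of_le' tendsto_const_nhds hlim
    (Eventually.of_forall fun _ => norm_nonneg _) ?_
  filter_upwards [eventually_gt_atTop 0] with n hn
  have hn' : (0 : ℝ) < n := by exact_mod_cast hn
  -- On the three sides of the square off the real axis, `|ζ| ≥ n`.
  have hside : ∀ ζ : ℂ, 0 ≤ ζ.im → (n : ℝ) ≤ ‖ζ‖ → ‖G ζ‖ ≤ B / (n : ℝ) ^ 2 := by
    intro ζ h0 hζ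
    refine (hB ζ h0).trans ?_
    rw [div_eq_mul_inv]
    gcongr
    nlinarith
  have hrect := integral_boundary_rect_eq_zero_of_differentiableOn G (-(n : ℂ)) (n + n * I)
    (hG.mono fun ζ hζ => by
      have : ζ.im ∈ Set.uIcc (-(n : ℂ)).im ((n : ℂ) + n * I).im := hζ.2
      simp only [neg_im, natCast_im, neg_zero, add_im, mul_im, natCast_re, I_im, mul_one, I_re,
        mul_zero, add_zero, zero_add] at this
      rw [uIcc_of_le hn'.le] at this
      show -δ < ζ.im
      linarith [this.1])
  simp only [neg_im, natCast_im, neg_zero, add_im, mul_im, natCast_re, I_im, mul_one, I_re,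
        mul_zero, add_zero, zero_add, neg_re, add_re, mul_re, sub_zero, ofReal_zero, zero_mul,
        smul_eq_mul, ofReal_neg, ofReal_natCast] at hrect
  have e : ∫ t in (-(n : ℝ))..(n : ℝ), G t = (∫ x in (-(n : ℝ))..(n : ℝ), G (x + n * I))
      - I * (∫ y in (0 : ℝ)..n, G (n + y * I)) + I * (∫ y in (0 : ℝ)..n, G (-n + y * I)) := by
    linear_combination hrect
  rw [e]
  have b1 : ‖∫ x in (-(n : ℝ))..(n : ℝ), G (x + n * I)‖ ≤ B / (n : ℝ) ^ 2 * |(n : ℝ) - -n| := by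
    refine intervalIntegral.norm_integral_le_of_norm_le_const fun x _ => hside _ (by simp) ?_
    simpa using Complex.abs_im_le_norm ((x : ℂ) + n * I)
  have b2 : ‖∫ y in (0 : ℝ)..n, G (n + y * I)‖ ≤ B / (n : ℝ) ^ 2 * |(n : ℝ) - 0| := by
    refine intervalIntegral.norm_integral_le_of_norm_le_const fun y hy => hside _ ?_ ?_
    · rw [uIoc_of_le hn'.le] at hy
      simpa using hy.1.le
    · simpa using Complex.abs_re_le_norm ((n : ℂ) + y * I)
  have b3 : ‖∫ y in (0 : ℝ)..n, G (-n + y * I)‖ ≤ B / (n : ℝ) ^ 2 * |(n : ℝ) - 0| := by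
    refine intervalIntegral.norm_integral_le_of_norm_le_const fun y hy => hside _ ?_ ?_
    · rw [uIoc_of_le hn'.le] at hy
      simpa using hy.1.le
    · simpa using Complex.abs_re_le_norm (-(n : ℂ) + y * I)
  refine (norm_add_le _ _).trans ((add_le_add_left (norm_sub_le _ _) _).trans ?_)
  rw [norm_mul, norm_mul, norm_I, one_mul, one_mul]
  refine (add_le_add (add_le_add b1 b2) b3).trans (le_of_eq ?_)
  rw [sub_neg_eq_add, sub_zero, abs_of_pos hn', abs_of_pos (by linarith : (0:ℝ) < n + n)]
  field_simp
  ring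

lemma integral_poisson {x y : ℝ} (hy : 0 < y) : ∫ t : ℝ, y / ((t - x) ^ 2 + y ^ 2) = Real.pi := by
  have h1 : ∀ t : ℝ, y / ((t - x) ^ 2 + y ^ 2) = y⁻¹ * (1 + (y⁻¹ * (t - x)) ^ 2)⁻¹ := by
    intro t
    field_simp
    ring
  simp_rw [h1]
  rw [integral_const_mul, integral_sub_right_eq_self (fun t => (1 + (y⁻¹ * t) ^ 2)⁻¹) x,
    Measure.integral_comp_mul_left (fun t => (1 + t ^ 2)⁻¹), integral_univ_inv_one_add_sq,
    inv_inv, abs_of_pos hy, smul_eq_mul]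
  field_simp

lemma conj_sub_ne {z ζ : ℂ} (hζ : -z.im < ζ.im) :
    ζ - (starRingEnd ℂ) z ≠ 0 := by
  intro h
  have := congrArg Complex.im h
  simp at this
  linarith

/-- Cauchy's integral against the reflected point, which lies outside the half-plane. -/
lemma integral_conj_cauchy {δ : ℝ} (hδ : 0 < δ) {G : ℂ → ℂ}
    (hG : DifferentiableOn ℂ G {ζ | -δ < ζ.im}) {B : ℝ}
    (hB : ∀ ζ : ℂ, 0 ≤ ζ.im → ‖G ζ‖ ≤ B * (1 + ‖ζ‖ ^ 2)⁻¹) {z : ℂ} (hz : 0 < z.im) :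
    Integrable (fun t : ℝ => G t / (t - (starRingEnd ℂ) z)) ∧
      ∫ t : ℝ, G t / (t - (starRingEnd ℂ) z) = 0 := by
  have hδ' : 0 < min δ z.im := lt_min hδ hz
  have hd : DifferentiableOn ℂ (fun ζ => G ζ / (ζ - (starRingEnd ℂ) z))
      {ζ | -(min δ z.im) < ζ.im} := by
    refine DifferentiableOn.div (hG.mono fun ζ hζ => ?_) (by fun_prop) fun ζ hζ => ?_
    · have : -(min δ z.im) < ζ.im := hζ
      show -δ < ζ.im
      linarith [min_le_left δ z.im]
    · have : -(min δ z.im) < ζ.im := hζ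
      exact conj_sub_ne (by linarith [min_le_right δ z.im])
  have hb : ∀ ζ : ℂ, 0 ≤ ζ.im →
      ‖G ζ / (ζ - (starRingEnd ℂ) z)‖ ≤ (B / z.im) * (1 + ‖ζ‖ ^ 2)⁻¹ := by
    intro ζ hζ
    have h1 : z.im ≤ ‖ζ - (starRingEnd ℂ) z‖ := by
      refine le_trans ?_ ((le_abs_self _).trans (Complex.abs_im_le_norm _))
      simpa using hζ
    rw [norm_div]
    calc ‖G ζ‖ / ‖ζ - (starRingEnd ℂ) z‖ ≤ (B * (1 + ‖ζ‖ ^ 2)⁻¹) / z.im := by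
          have := hB ζ hζ
          have := (norm_nonneg _).trans this
          gcongr
      _ = _ := by ring
  exact ⟨integrable_line hδ' hd hb, integral_line_eq_zero hδ' hd hb⟩

/-- Cauchy's formula on the half-plane for functions that are `O(ζ⁻²)`. -/
lemma integral_cauchy {δ : ℝ} (hδ : 0 < δ) {G : ℂ → ℂ}
    (hG : DifferentiableOn ℂ G {ζ | -δ < ζ.im}) {B : ℝ}
    (hB : ∀ ζ : ℂ, 0 ≤ ζ.im → ‖G ζ‖ ≤ B * (1 + ‖ζ‖ ^ 2)⁻¹) {z : ℂ} (hz : 0 < z.im) :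
    Integrable (fun t : ℝ => G t / (t - z)) ∧
      ∫ t : ℝ, G t / (t - z) = 2 * Real.pi * I * G z := by
  obtain ⟨hi2, hz2⟩ := integral_conj_cauchy hδ hG hB hz
  have hB0 : 0 ≤ B := by
    have := (norm_nonneg _).trans (hB 0 (by simp))
    simpa using this
  have hne : ∀ t : ℝ, (t : ℂ) - z ≠ 0 := by
    intro t h
    have := congrArg Complex.im h
    simp at this
    linarith
  have hne' : ∀ t : ℝ, (t : ℂ) - (starRingEnd ℂ) z ≠ 0 := fun t =>
    conj_sub_ne (by simpa using hz)
  -- The Poisson-type kernel makes the difference quotient of `G` decay quadratically.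
  set P : ℂ → ℂ := fun ζ => dslope G z ζ * (2 * I * z.im / (ζ - (starRingEnd ℂ) z)) with hP
  have hδ' : 0 < min δ z.im := lt_min hδ hz
  have hsub : {ζ : ℂ | -(min δ z.im) < ζ.im} ⊆ {ζ : ℂ | -δ < ζ.im} := fun ζ hζ => by
    have : -(min δ z.im) < ζ.im := hζ
    show -δ < ζ.im
    linarith [min_le_left δ z.im]
  have hPd : DifferentiableOn ℂ P {ζ | -(min δ z.im) < ζ.im} := by
    refine DifferentiableOn.mul ?_ ?_
    · refine (Complex.differentiableOn_dslope ?_).2 (hG.mono hsub)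
      exact (isOpen_lt continuous_const Complex.continuous_im).mem_nhds
        (show -(min δ z.im) < z.im by linarith)
    · refine DifferentiableOn.div (by fun_prop) (by fun_prop) fun ζ hζ => ?_
      have : -(min δ z.im) < ζ.im := hζ
      exact conj_sub_ne (by linarith [min_le_right δ z.im])
  have hPb : ∀ ζ : ℂ, 0 ≤ ζ.im → 2 * ‖z‖ + 1 ≤ ‖ζ‖ → ‖P ζ‖ ≤ (16 * B * z.im) / ‖ζ‖ ^ 2 := by
    intro ζ hζ hR
    have hz0 := norm_nonneg z
    have hζz : ζ ≠ z := by rintro rfl; linarith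
    have h1 : ‖ζ‖ / 2 ≤ ‖ζ - z‖ := by
      have := norm_sub_norm_le ζ z
      linarith
    have h2 : ‖ζ‖ / 2 ≤ ‖ζ - (starRingEnd ℂ) z‖ := by
      have := norm_sub_norm_le ζ ((starRingEnd ℂ) z)
      rw [Complex.norm_conj] at this
      linarith
    have h3 : ∀ w : ℂ, 0 ≤ w.im → ‖G w‖ ≤ B := fun w hw => (hB w hw).trans
      (mul_le_of_le_one_right hB0 (inv_le_one_of_one_le₀ (by nlinarith [sq_nonneg ‖w‖])))
    have h4 : ‖G ζ - G z‖ ≤ 2 * B := by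
      have := norm_sub_le (G ζ) (G z)
      linarith [h3 ζ hζ, h3 z hz.le]
    have hζ0 : 0 < ‖ζ‖ := by linarith
    have h5 : ‖P ζ‖ = ‖G ζ - G z‖ / ‖ζ - z‖ * (2 * z.im / ‖ζ - (starRingEnd ℂ) z‖) := by
      simp only [hP, dslope_of_ne _ hζz, slope_def_field, norm_mul, norm_div, norm_I,
        Complex.norm_real, Complex.norm_ofNat, Real.norm_of_nonneg hz.le, mul_one]
    rw [h5]
    calc _ ≤ 2 * B / (‖ζ‖ / 2) * (2 * z.im / (‖ζ‖ / 2)) := by gcongr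
      _ = _ := by field_simp; ring
  obtain ⟨B', hB'0, hB'⟩ := exists_decay_bound hδ' hPd hPb
  have hPi := integrable_line hδ' hPd hB'
  have hP0 := integral_line_eq_zero hδ' hPd hB'
  have hker : ∀ t : ℝ, 2 * I * (z.im : ℂ) / (((t : ℂ) - z) * (t - (starRingEnd ℂ) z))
      = 2 * I * ((z.im / ((t - z.re) ^ 2 + z.im ^ 2) : ℝ) : ℂ) := by
    intro t
    have : ((t : ℂ) - z) * (t - (starRingEnd ℂ) z) = (((t - z.re) ^ 2 + z.im ^ 2 : ℝ) : ℂ) := by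
      apply Complex.ext
      · simp [pow_two]
      · simp [pow_two]; ring
    rw [this, mul_div_assoc, ← ofReal_div]
  have hiPoisson : Integrable fun t : ℝ => z.im / ((t - z.re) ^ 2 + z.im ^ 2) := by
    by_contra hcon
    have := integral_poisson (x := z.re) hz
    rw [integral_undef hcon] at this
    exact Real.pi_pos.ne this
  have hPt : ∀ t : ℝ, G t / (t - z) = P t + (G t / (t - (starRingEnd ℂ) z)
      + G z * (2 * I * ((z.im / ((t - z.re) ^ 2 + z.im ^ 2) : ℝ) : ℂ))) := by
    intro t
    rw [← hker t]
    have htz : (t : ℂ) ≠ z := fun h => hne t (by rw [h, sub_self])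
    have hzz : 2 * I * (z.im : ℂ) = z - (starRingEnd ℂ) z := by
      rw [Complex.sub_conj]; push_cast; ring
    simp only [hP, dslope_of_ne _ htz, slope_def_field, hzz]
    have := hne t
    have := hne' t
    field_simp
    ring
  have hi3 : Integrable fun t : ℝ =>
      G z * (2 * I * ((z.im / ((t - z.re) ^ 2 + z.im ^ 2) : ℝ) : ℂ)) :=
    (hiPoisson.ofReal.const_mul _).const_mul _
  have hi23 : Integrable fun t : ℝ => G t / (t - (starRingEnd ℂ) z)
      + G z * (2 * I * ((z.im / ((t - z.re) ^ 2 + z.im ^ 2) : ℝ) : ℂ)) := hi2.add hi3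
  simp_rw [hPt]
  refine ⟨hPi.add hi23, ?_⟩
  rw [integral_add hPi hi23, integral_add hi2 hi3, hP0, hz2, integral_const_mul,
    integral_const_mul, integral_complex_ofReal, integral_poisson hz]
  ring

/-! ### Representing measures on `[0, 1]` -/

/-- The kernel `(λ + 1) / (λ - z²)` in the compactified variable `s = 1 / (λ + 1) ∈ [0, 1]`; the
point `s = 0` corresponds to `λ = ∞`. -/
def ck (z : ℂ) (s : unitInterval) : ℂ := (1 - ((s : ℝ) : ℂ) * (1 + z ^ 2))⁻¹

lemma ck_denom_ne_zero {z : ℂ} (hz : 0 < z.im) (s : unitInterval) :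
    1 - ((s : ℝ) : ℂ) * (1 + z ^ 2) ≠ 0 := by
  rcases eq_or_ne (s : ℝ) 0 with h0 | h0
  · simp [h0]
  · have hs : (0 : ℝ) < s := lt_of_le_of_ne s.2.1 (Ne.symm h0)
    have h1 := ker_ne_zero hz (l := (1 - s) / s) (div_nonneg (sub_nonneg.2 s.2.2) hs.le)
    have h2 : ((s : ℝ) : ℂ) ≠ 0 := by exact_mod_cast h0
    have h3 : 1 - ((s : ℝ) : ℂ) * (1 + z ^ 2)
        = ((s : ℝ) : ℂ) * ((((1 - s) / s : ℝ) : ℂ) - z ^ 2) := by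
      push_cast
      field_simp
      ring
    rw [h3]
    exact mul_ne_zero h2 h1

lemma continuous_ck {z : ℂ} (hz : 0 < z.im) : Continuous (ck z) := by
  unfold ck
  exact Continuous.inv₀ (by fun_prop) (ck_denom_ne_zero hz)

lemma ck_I (s : unitInterval) : ck I s = 1 := by simp [ck]

/-- For holomorphic functions on a neighbourhood of the closed upper half-plane with the symmetry
and passivity of `K_h`, quadratic decay turns Cauchy's formula into a Stieltjes representation with
density `(2 t / π) Im G(t)` in the variable `λ = t²`. -/
lemma stieltjes_line {δ : ℝ} (hδ : 0 < δ) {G : ℂ → ℂ}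
    (hG : DifferentiableOn ℂ G {ζ | -δ < ζ.im}) {B : ℝ}
    (hB : ∀ ζ : ℂ, 0 ≤ ζ.im → ‖G ζ‖ ≤ B * (1 + ‖ζ‖ ^ 2)⁻¹)
    (hsym : ∀ t : ℝ, G (-t) = (starRingEnd ℂ) (G t)) {z : ℂ} (hz : 0 < z.im) :
    G z = ∫ t in Ioi (0 : ℝ), ((2 * t * (G t).im / Real.pi : ℝ) : ℂ) / ((t : ℂ) ^ 2 - z ^ 2) := by
  obtain ⟨hi1, h1⟩ := integral_cauchy hδ hG hB hz
  obtain ⟨hi2, h2⟩ := integral_conj_cauchy hδ hG hB hz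
  have hne : ∀ t : ℝ, (t : ℂ) - z ≠ 0 := by
    intro t h
    have := congrArg Complex.im h
    simp at this
    linarith
  have hconj : ∀ t : ℝ, (starRingEnd ℂ) (G t / (t - (starRingEnd ℂ) z))
      = (starRingEnd ℂ) (G t) / (t - z) := by
    intro t; simp
  have h3 : ∫ t : ℝ, (starRingEnd ℂ) (G t) / (t - z) = 0 := by
    simp_rw [← hconj]
    rw [integral_conj, h2, map_zero]
  have hi3 : Integrable fun t : ℝ => (starRingEnd ℂ) (G t) / (t - z) := by
    simp_rw [← hconj]
    exact (LinearIsometryEquiv.integrable_comp_iff Complex.conjLIE).2 hi2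
  have hφ : ∀ t : ℝ, ((G t).im : ℂ) / (t - z)
      = (2 * I)⁻¹ * (G t / (t - z) - (starRingEnd ℂ) (G t) / (t - z)) := by
    intro t
    rw [← sub_div, Complex.sub_conj]
    have := hne t
    field_simp
    push_cast
    ring
  have hi4 : Integrable fun t : ℝ => ((G t).im : ℂ) / (t - z) := by
    simp_rw [hφ]
    exact (hi1.sub hi3).const_mul _
  have h4 : ∫ t : ℝ, ((G t).im : ℂ) / (t - z) = Real.pi * G z := by
    simp_rw [hφ]
    rw [integral_const_mul, integral_sub hi1 hi3, h1, h3]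
    field_simp
    ring
  have h5 : ∫ t in Iic (0 : ℝ), ((G t).im : ℂ) / (t - z)
      = ∫ t in Ioi (0 : ℝ), ((G t).im : ℂ) / (t + z) := by
    have := integral_comp_neg_Ioi (0 : ℝ) fun t : ℝ => ((G t).im : ℂ) / (t - z)
    rw [neg_zero] at this
    rw [← this]
    refine integral_congr_ae (ae_of_all _ fun t => ?_)
    simp only [ofReal_neg, hsym, conj_im]
    rw [neg_div, ← div_neg]
    congr 1
    ring
  have hi5 : IntegrableOn (fun t : ℝ => ((G t).im : ℂ) / (t + z)) (Ioi 0) := by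
    have hi : Integrable fun t : ℝ => ((G (-t)).im : ℂ) / (-t - z) := by
      simpa using hi4.comp_neg
    refine (hi.congr (ae_of_all _ fun t => ?_)).integrableOn
    simp only [hsym, conj_im, ofReal_neg]
    rw [neg_div, ← div_neg]
    congr 1
    ring
  have h6 : (Real.pi : ℂ) * G z = ∫ t in Ioi (0 : ℝ),
      (((G t).im : ℂ) / (t + z) + ((G t).im : ℂ) / (t - z)) := by
    rw [integral_add hi5 hi4.integrableOn, ← h5, ← h4,
      ← setIntegral_union (Iic_disjoint_Ioi le_rfl) measurableSet_Ioi hi4.integrableOn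
        hi4.integrableOn, Iic_union_Ioi, setIntegral_univ]
  have hpi : (Real.pi : ℂ) ≠ 0 := by exact_mod_cast Real.pi_ne_zero
  have h7 : G z = (Real.pi : ℂ)⁻¹ * ((Real.pi : ℂ) * G z) := by field_simp
  rw [h7, h6, ← integral_const_mul]
  refine integral_congr_ae (ae_of_all _ fun t => ?_)
  have a := hne t
  have b : (t : ℂ) + z ≠ 0 := by
    have := hne (-t)
    intro h
    apply this
    push_cast
    linear_combination -h
  have c : (t : ℂ) ^ 2 - z ^ 2 ≠ 0 := by
    rw [sq_sub_sq]
    exact mul_ne_zero b a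
  push_cast
  field_simp
  ring

/-- The change of variables `t ↦ 1 / (1 + t²)`. -/
def toUnit (t : ℝ) : unitInterval :=
  ⟨(1 + t ^ 2)⁻¹, by positivity, inv_le_one_of_one_le₀ (by nlinarith)⟩

lemma measurable_toUnit : Measurable toUnit :=
  Measurable.subtype_mk (by fun_prop)

lemma ck_toUnit {z : ℂ} (hz : 0 < z.im) (t : ℝ) :
    ck z (toUnit t) = (1 + (t : ℂ) ^ 2) / ((t : ℂ) ^ 2 - z ^ 2) := by
  have h1 : (1 : ℂ) + (t : ℂ) ^ 2 ≠ 0 := by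
    have : (1 : ℝ) + t ^ 2 ≠ 0 := by positivity
    exact_mod_cast this
  have h2 : (t : ℂ) ^ 2 - z ^ 2 ≠ 0 := by
    have := ker_ne_zero hz (sq_nonneg t)
    exact_mod_cast this
  have h3 : 1 - (1 + (t : ℂ) ^ 2)⁻¹ * (1 + z ^ 2)
      = ((t : ℂ) ^ 2 - z ^ 2) / (1 + (t : ℂ) ^ 2) := by
    field_simp
    ring
  simp only [ck, toUnit]
  push_cast
  rw [h3, inv_div]

/-- The Stieltjes representation of `stieltjes_line`, transported to `[0, 1]`. The density there is
`2 t / (1 + t²) · Im G(t) / π`, which is nonnegative by passivity and integrable by the decay. -/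
lemma exists_measure_of_decay {δ : ℝ} (hδ : 0 < δ) {G : ℂ → ℂ}
    (hG : DifferentiableOn ℂ G {ζ | -δ < ζ.im}) {B : ℝ}
    (hB : ∀ ζ : ℂ, 0 ≤ ζ.im → ‖G ζ‖ ≤ B * (1 + ‖ζ‖ ^ 2)⁻¹)
    (hsym : ∀ t : ℝ, G (-t) = (starRingEnd ℂ) (G t)) (hpos : ∀ t : ℝ, 0 < t → 0 ≤ (G t).im) :
    ∃ ν : FiniteMeasure unitInterval, ∀ z : ℂ, 0 < z.im →
      G z = ∫ s, ck z s ∂(ν : Measure unitInterval) := by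
  set d : ℝ → ℝ := fun t => 2 * t / (1 + t ^ 2) * ((G t).im / Real.pi) with hd
  have hdc : Continuous d := by
    have h1 : Continuous fun t : ℝ => (G t).im :=
      Complex.continuous_im.comp (continuous_line hδ hG)
    refine Continuous.mul (Continuous.div (by fun_prop) (by fun_prop) fun t => ?_)
      (h1.div_const _)
    positivity
  have hdm : Measurable fun t => ENNReal.ofReal (d t) := hdc.measurable.ennreal_ofReal
  have hd0 : ∀ t : ℝ, 0 < t → 0 ≤ d t := fun t ht => by
    have := hpos t ht
    simp only [hd]
    positivity
  have hdi : IntegrableOn d (Ioi 0) := by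
    have h1 : Integrable fun t : ℝ => (G t).im / Real.pi :=
      (integrable_line hδ hG hB).im.div_const _
    refine Integrable.mono' h1.norm.integrableOn hdc.aestronglyMeasurable ?_
    filter_upwards [ae_restrict_mem measurableSet_Ioi] with t ht
    have ht' : 0 < t := ht
    simp only [hd, norm_mul]
    refine mul_le_of_le_one_left (norm_nonneg _) ?_
    rw [Real.norm_of_nonneg (by positivity), div_le_one (by positivity)]
    nlinarith [sq_nonneg (t - 1)]
  set m : Measure ℝ := (volume.restrict (Ioi 0)).withDensity fun t => ENNReal.ofReal (d t) with hm
  have hmfin : IsFiniteMeasure m := by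
    refine isFiniteMeasure_withDensity ?_
    have := hdi.2
    rw [hasFiniteIntegral_iff_ofReal] at this
    · exact this.ne
    · filter_upwards [ae_restrict_mem measurableSet_Ioi] with t ht
      exact hd0 t ht
  have hmm : IsFiniteMeasure (m.map toUnit) := inferInstance
  refine ⟨⟨m.map toUnit, hmm⟩, fun z hz => ?_⟩
  change G z = ∫ s, ck z s ∂(m.map toUnit)
  rw [integral_map measurable_toUnit.aemeasurable
    (continuous_ck hz).aestronglyMeasurable, hm,
    integral_withDensity_eq_integral_toReal_smul hdm (ae_of_all _ fun _ => ENNReal.ofReal_lt_top),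
    stieltjes_line hδ hG hB hsym hz]
  refine setIntegral_congr_fun measurableSet_Ioi fun t ht => ?_
  rw [ENNReal.toReal_ofReal (hd0 t ht), ck_toUnit hz, Complex.real_smul]
  have h1 : (1 : ℂ) + (t : ℂ) ^ 2 ≠ 0 := by
    have : (1 : ℝ) + t ^ 2 ≠ 0 := by positivity
    exact_mod_cast this
  simp only [hd]
  push_cast
  field_simp

/-- Helly-type selection: pointwise limits of transforms of finite measures on the compact space
`[0, 1]` are again such transforms. The masses are controlled by the value at `z = i`. -/
lemma exists_measure_of_tendsto {ν : ℕ → FiniteMeasure unitInterval} {g : ℂ → ℂ}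
    (hg : ∀ z : ℂ, 0 < z.im →
      Tendsto (fun n => ∫ s, ck z s ∂(ν n : Measure unitInterval)) atTop (𝓝 (g z))) :
    ∃ μ : FiniteMeasure unitInterval, ∀ z : ℂ, 0 < z.im →
      g z = ∫ s, ck z s ∂(μ : Measure unitInterval) := by
  have hI := hg I (by simp)
  simp_rw [ck_I] at hI
  obtain ⟨C, hC⟩ := hI.norm.bddAbove_range
  have hmass : ∀ n, (ν n).mass ≤ C.toNNReal := by
    intro n
    have := hC ⟨n, rfl⟩
    simp only [integral_const, Complex.real_smul, mul_one, Complex.norm_real] at this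
    rw [← NNReal.coe_le_coe]
    exact ((Real.le_norm_self _).trans this).trans (Real.le_coe_toNNReal C)
  have hcomp := isCompact_setOfPred_finiteMeasure_le_of_compactSpace unitInterval C.toNNReal
  set U : Ultrafilter ℕ := Filter.hyperfilter ℕ
  have hU : (U : Filter ℕ) ≤ atTop := by
    rw [← Nat.cofinite_eq_atTop]
    exact Filter.hyperfilter_le_cofinite
  obtain ⟨μ, -, hμ⟩ := hcomp.ultrafilter_le_nhds (U.map ν)
    (by
      rw [Filter.le_principal_iff, Ultrafilter.coe_map]
      exact Filter.mem_map.2 (Filter.univ_mem' hmass))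
  have hμ' : Tendsto ν (U : Filter ℕ) (𝓝 μ) := hμ
  refine ⟨μ, fun z hz => ?_⟩
  have h1 := (FiniteMeasure.tendsto_iff_forall_integral_rclike_tendsto ℂ).1 hμ'
    (BoundedContinuousFunction.mkOfCompact ⟨ck z, continuous_ck hz⟩)
  exact tendsto_nhds_unique ((hg z hz).mono_left hU) h1

/-! ### Limits of elements of `K_h` -/

/-- A vertical shift of an element of `K_h` is holomorphic across the real line and inherits the
quadratic decay from the plasma limit, so it is a transform of a finite measure on `[0, 1]`. -/
lemma MemK.exists_measure {h : ℝ} (hh : 0 < h) {F : ℂ → ℂ} (hF : MemK h F) {ε : ℝ} (hε : 0 < ε) :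
    ∃ ν : FiniteMeasure unitInterval, ∀ z : ℂ, 0 < z.im →
      F (z - I * h + I * ε) = ∫ s, ck z s ∂(ν : Measure unitInterval) := by
  obtain ⟨hd, hsym, hpos, A, hA, hpl⟩ := hF
  have him : ∀ ζ : ℂ, (ζ - I * h + I * ε).im = ζ.im - h + ε := by intro ζ; simp
  have hG : DifferentiableOn ℂ (fun ζ : ℂ => F (ζ - I * h + I * ε)) {ζ | -ε < ζ.im} := by
    refine hd.comp (by fun_prop) fun ζ hζ => ?_
    have : -ε < ζ.im := hζ
    show -h < (ζ - I * h + I * ε).im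
    rw [him]; linarith
  rw [PlasmaLimit, isBigO_iff] at hpl
  obtain ⟨c, hc⟩ := hpl
  rw [atInftyIn, Filter.eventually_inf_principal, Filter.eventually_comap] at hc
  obtain ⟨R, hR⟩ := eventually_atTop.1 hc
  have hdecay : ∀ ζ : ℂ, 0 ≤ ζ.im → 2 * (h + ε) + 2 + 2 * |R| ≤ ‖ζ‖ →
      ‖F (ζ - I * h + I * ε)‖ ≤ (4 * (A + |c|)) / ‖ζ‖ ^ 2 := by
    intro ζ hζ hζR
    set ω := ζ - I * h + I * ε with hω
    have hωim : ω ∈ Hh h := by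
      show -h < ω.im
      rw [hω, him]; linarith
    have hnorm : ‖ζ‖ / 2 ≤ ‖ω‖ := by
      have e : ω + (I * h - I * ε) = ζ := by rw [hω]; ring
      have h1 := norm_add_le ω (I * h - I * ε)
      have h2 := norm_sub_le (I * (h : ℂ)) (I * ε)
      rw [e] at h1
      simp only [norm_mul, norm_I, Complex.norm_real, Real.norm_of_nonneg hh.le,
        Real.norm_of_nonneg hε.le, one_mul] at h2
      linarith [abs_nonneg R]
    have hω1 : 1 ≤ ‖ω‖ := by linarith [abs_nonneg R]
    have h1 := hR ‖ω‖ (by linarith [le_abs_self R]) ω rfl hωim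
    have h2 : ‖F ω‖ ≤ ‖F ω + (A : ℂ) / ω ^ 2‖ + ‖(A : ℂ) / ω ^ 2‖ := by
      have := norm_sub_le (F ω + (A : ℂ) / ω ^ 2) ((A : ℂ) / ω ^ 2)
      rwa [add_sub_cancel_right] at this
    have h3 : ‖(A : ℂ) / ω ^ 2‖ = A / ‖ω‖ ^ 2 := by
      rw [norm_div, norm_pow, Complex.norm_real, Real.norm_of_nonneg hA.le]
    have h4 : ‖F ω + (A : ℂ) / ω ^ 2‖ ≤ |c| / ‖ω‖ ^ 2 := by
      refine h1.trans ?_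
      rw [norm_pow, norm_inv, norm_norm, inv_pow, ← div_eq_mul_inv]
      exact div_le_div₀ (abs_nonneg c) (le_abs_self c) (by positivity)
        (pow_le_pow_right₀ hω1 (by norm_num))
    have hζ0 : 0 < ‖ζ‖ := by linarith [abs_nonneg R]
    calc ‖F ω‖ ≤ |c| / ‖ω‖ ^ 2 + A / ‖ω‖ ^ 2 := by rw [← h3]; linarith
      _ = (A + |c|) / ‖ω‖ ^ 2 := by ring
      _ ≤ (A + |c|) / (‖ζ‖ / 2) ^ 2 := by gcongr
      _ = _ := by field_simp; norm_num
  obtain ⟨B, -, hB⟩ := exists_decay_bound hε hG hdecay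
  refine exists_measure_of_decay hε hG hB (fun t => ?_) fun t ht => ?_
  · rw [hsym _ (by show -h < ((t : ℂ) - I * h + I * ε).im; rw [him]; simp; linarith)]
    congr 1
    simp only [map_add, map_sub, map_mul, conj_I, conj_ofReal]
    ring
  · refine (hpos _ ?_ ?_).le
    · rw [him]; simp; linarith
    · simpa using ht

/-- Undoing the compactification: the atom at `s = 0` becomes the constant `ρ`, and the rest is
transported to `[0, ∞)` by `s ↦ (1 - s) / s` with weight `1 / s = λ + 1`. -/
lemma memS_of_measure {h : ℝ} {f : ℂ → ℂ} (ν : FiniteMeasure unitInterval)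
    (hf : ∀ z : ℂ, 0 < z.im → f (z - I * h) = ∫ s, ck z s ∂(ν : Measure unitInterval)) :
    MemS h f := by
  set g : unitInterval → ℝ := fun s => (1 - s) / s with hg
  have hgm : Measurable g := by
    simp only [hg]
    exact (measurable_const.sub measurable_subtype_coe).div measurable_subtype_coe
  have hg0 : ∀ s, 0 ≤ g s := fun s => div_nonneg (sub_nonneg.2 s.2.2) s.2.1
  set w : unitInterval → ENNReal := fun s => ENNReal.ofReal (1 / (s : ℝ)) with hw
  have hwm : Measurable w := (measurable_const.div measurable_subtype_coe).ennreal_ofReal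
  set μ : Measure unitInterval := (ν : Measure unitInterval).restrict {0}ᶜ with hμ
  have hμpos : ∀ᵐ s ∂μ, (0 : ℝ) < (s : unitInterval) := by
    filter_upwards [ae_restrict_mem (measurableSet_singleton (0 : unitInterval)).compl] with s hs
    exact lt_of_le_of_ne s.2.1 fun h0 => hs (Subtype.ext h0.symm)
  set σ : Measure ℝ := (μ.withDensity w).map g with hσ
  have hσIci : σ.restrict (Ici 0) = σ := by
    rw [hσ, Measure.restrict_map hgm measurableSet_Ici]
    have : g ⁻¹' Ici 0 = univ := eq_univ_of_forall hg0
    rw [this, Measure.restrict_univ]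
  refine ⟨(ν : Measure unitInterval).real {0}, σ, measureReal_nonneg, ?_, fun ω hω => ?_⟩
  · rw [FinCond, hσIci, hσ, lintegral_map (by fun_prop) hgm,
      lintegral_withDensity_eq_lintegral_mul _ hwm (by fun_prop)]
    have : ∫⁻ s, (w * fun s => ENNReal.ofReal (1 / (g s + 1))) s ∂μ = ∫⁻ _, 1 ∂μ := by
      refine lintegral_congr_ae ?_
      filter_upwards [hμpos] with s hs
      simp only [Pi.mul_apply, hw, hg]
      rw [← ENNReal.ofReal_mul (by positivity)]
      have : 1 / (s : ℝ) * (1 / ((1 - s) / s + 1)) = 1 := by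
        field_simp
        ring
      rw [this, ENNReal.ofReal_one]
    rw [this, lintegral_one]
    exact measure_lt_top _ _
  · have hz : 0 < (ω + I * (h : ℂ)).im := by
      have : -h < ω.im := hω
      simp; linarith
    have h1 := hf _ hz
    rw [add_sub_cancel_right] at h1
    rw [h1, sInt, hσIci]
    set z := ω + I * (h : ℂ)
    have hintg : Integrable (ck z) (ν : Measure unitInterval) :=
      (BoundedContinuousFunction.mkOfCompact ⟨ck z, continuous_ck hz⟩).integrable _
    rw [← integral_add_compl (measurableSet_singleton (0 : unitInterval)) hintg]
    congr 1
    · rw [integral_singleton]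
      simp [ck]
    · rw [hσ, integral_map hgm.aemeasurable (measurable_ker z).aestronglyMeasurable,
        integral_withDensity_eq_integral_toReal_smul hwm
          (ae_of_all _ fun _ => ENNReal.ofReal_lt_top)]
      refine integral_congr_ae ?_
      filter_upwards [hμpos] with s hs
      have hs' : ((s : ℝ) : ℂ) ≠ 0 := by exact_mod_cast hs.ne'
      have hk : 1 - ((s : ℝ) : ℂ) * (1 + z ^ 2) = s * (((g s : ℝ) : ℂ) - z ^ 2) := by
        simp only [hg]
        push_cast
        field_simp
        ring
      rw [ENNReal.toReal_ofReal (by positivity), Complex.real_smul, ck, hk, mul_inv]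
      push_cast
      rw [one_div]

/-- Locally uniform limits of elements of `K_h` lie in `S_h`. -/
lemma memS_of_tendsto {h : ℝ} (hh : 0 < h) {f : ℂ → ℂ} {F : ℕ → ℂ → ℂ} (hF : ∀ n, MemK h (F n))
    (hlim : ∀ K ⊆ Hh h, IsCompact K → TendstoUniformlyOn F f atTop K) : MemS h f := by
  have hε : ∀ n : ℕ, (0 : ℝ) < 1 / ((n : ℝ) + 1) := fun n => Nat.one_div_pos_of_nat
  choose ν hν using fun n => (hF n).exists_measure hh (hε n)
  suffices H : ∀ z : ℂ, 0 < z.im →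
      Tendsto (fun n => ∫ s, ck z s ∂(ν n : Measure unitInterval)) atTop (𝓝 (f (z - I * h))) by
    obtain ⟨μ, hμ⟩ := exists_measure_of_tendsto (g := fun z => f (z - I * h)) H
    exact memS_of_measure μ hμ
  intro z hz
  -- The shifted points stay in a vertical segment, where the convergence is uniform.
  set K : Set ℂ := (fun r : ℝ => z - I * h + I * r) '' Icc 0 1 with hK
  have hKc : IsCompact K := isCompact_Icc.image (by fun_prop)
  have hKh : K ⊆ Hh h := by
    rintro _ ⟨r, hr, rfl⟩
    show -h < (z - I * h + I * (r : ℂ)).im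
    have := hr.1
    simp
    linarith
  have hu := hlim K hKh hKc
  have hfc : ContinuousOn f K :=
    hu.continuousOn (Frequently.of_forall fun n => (hF n).1.continuousOn.mono hKh)
  have hmem : ∀ n : ℕ, z - I * h + I * ((1 / ((n : ℝ) + 1) : ℝ) : ℂ) ∈ K := fun n =>
    ⟨1 / ((n : ℝ) + 1), ⟨(hε n).le, by
      rw [div_le_one (by positivity)]; linarith [n.cast_nonneg (α := ℝ)]⟩, rfl⟩
  have hmem0 : z - I * h ∈ K := ⟨0, by simp, by simp⟩
  have hpt : Tendsto (fun n : ℕ => z - I * h + I * ((1 / ((n : ℝ) + 1) : ℝ) : ℂ)) atTop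
      (𝓝[K] (z - I * h)) := by
    refine tendsto_nhdsWithin_iff.2 ⟨?_, Eventually.of_forall hmem⟩
    have h1 := (Complex.continuous_ofReal.tendsto 0).comp
      (tendsto_one_div_add_atTop_nhds_zero_nat (𝕜 := ℝ))
    simpa using (h1.const_mul I).const_add (z - I * h)
  have h2 := (hfc _ hmem0).tendsto.comp hpt
  refine tendsto_of_tendsto_of_dist h2 ?_
  rw [Metric.tendstoUniformlyOn_iff] at hu
  rw [Metric.tendsto_atTop]
  intro e he
  obtain ⟨N, hN⟩ := eventually_atTop.1 (hu e he)
  refine ⟨N, fun n hn => ?_⟩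
  rw [Real.dist_0_eq_abs, abs_of_nonneg dist_nonneg, ← hν n z hz]
  exact hN n hn _ (hmem n)

/-- Every `f ∈ S_h` is the limit, uniformly on compact subsets of `ℍ_h`,
of a sequence of functions of `K_h`; consequently the closure of `K_h` in `H(ℍ_h)`
equals `S_h`: `f ∈ S_h` iff `f` is such a limit. -/
theorem Sh_is_closure_of_Kh (h : ℝ) (hh : 0 < h) :
    (∀ f : ℂ → ℂ, MemS h f →
      ∃ F : ℕ → ℂ → ℂ, (∀ n, MemK h (F n)) ∧
        ∀ K ⊆ Hh h, IsCompact K → TendstoUniformlyOn F f atTop K) ∧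
    (∀ f : ℂ → ℂ,
      (MemS h f ↔
        ∃ F : ℕ → ℂ → ℂ, (∀ n, MemK h (F n)) ∧
          ∀ K ⊆ Hh h, IsCompact K → TendstoUniformlyOn F f atTop K)) := by
  refine ⟨fun f hf => hf.exists_seq hh, fun f => ⟨fun hf => hf.exists_seq hh, ?_⟩⟩
  rintro ⟨F, hF, hlim⟩
  exact memS_of_tendsto hh hF hlim
end
end

section
/- Let 0 < h' < h. Then for every f ∈ K_h, the function ω ↦ f(ω)/(ω + ih) belongs to H²(ℍ_{h'}), and its H²(ℍ_{h'}) norm is comparable to ‖σ‖_*: there exist constants 0 < c ≤ C depending only on h − h' such that c ‖σ‖_* ≤ ‖f(·)/(· + ih)‖_{H²(ℍ_{h'})} ≤ C ‖σ‖_*, where σ is the spectral measure of f. -/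
/-!
Put `ζ = ω + ih` and `dμ(λ) = dσ(λ)/(λ+1)`, a finite measure of total mass `‖σ‖_*`. Then
`f(ω)/(ω + ih) = ∫ q(ζ, λ) dμ(λ)` with `q(ζ, λ) = (1 + λ)/(ζ (λ - ζ²))` (`sInt_div_eq`), and the
closed half-plane `Im ω ≥ -h'` becomes `Im ζ ≥ δ`, where `δ = h - h'`.

*Upper bound.* The partial fraction expansion
`λ/(ζ (λ - ζ²)) = 1/ζ + (1/(√λ - ζ) - 1/(√λ + ζ))/2` bounds `q(·, λ)` by three translates of
`1/ζ` (`norm_qker_le`), so its `L²` norm on every line `Im ζ = y ≥ δ` is bounded by a constant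
depending only on `δ` (`lintegral_qker_sq_le`). Cauchy–Schwarz in `λ` and Tonelli then give
`∫ |f/(ω + ih)|² ≤ C ‖σ‖_*²` on all these lines (`lintegral_sq_le`), which yields both the
membership in `H²(ℍ_{h'})` and the upper estimate.

*Lower bound.* For `ζ = x + iδ` with `0 < x < δ/2` the number `λ - ζ²` has positive real part,
comparable to `λ + 1` and to `|λ - ζ²|`. Hence `Re (ζ q(ζ, λ))` is bounded below by a positive
constant (`re_mul_qker_ge`), so `|f/(ω + ih)| ≥ c ‖σ‖_*` on this segment
(`norm_integral_qker_ge`), and integrating over the segment suffices.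
-/

open MeasureTheory Complex Filter Set Topology Asymptotics

noncomputable section

/-- The closed half-plane `{ω : ℂ | Im ω ≥ -h}`. -/
def HhC (h : ℝ) : Set ℂ := {ω : ℂ | -h ≤ ω.im}

/-- Membership in the Hardy space `H²(ℍ_h)` (analytic with uniformly bounded horizontal
`L²` norms, with boundary data on `Im ω = -h`). -/
def MemH2 (h : ℝ) (f : ℂ → ℂ) : Prop :=
  DifferentiableOn ℂ f (Hh h) ∧ ContinuousOn f (HhC h) ∧
  ∃ C : ℝ, ∀ y : ℝ, -h ≤ y → (∫ x : ℝ, ‖f ((x:ℂ) + I * (y:ℂ))‖ ^ 2) ≤ C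

/-- The `H²(ℍ_h)` norm: boundary `L²` norm on the line `Im ω = -h`. -/
def H2norm (h : ℝ) (f : ℂ → ℂ) : ℝ := Real.sqrt (∫ x : ℝ, ‖f ((x:ℂ) - I * (h:ℂ))‖ ^ 2)

/-- `L²(-1,1)` norm of (the restriction to `(-1,1)` of) `f`. -/
def L2norm11 (f : ℂ → ℂ) : ℝ := Real.sqrt (∫ x in Ioo (-1:ℝ) 1, ‖f (x:ℂ)‖ ^ 2)

/-- The symmetrization operator `S f (ω) = conj (f (-conj ω))`. -/
def Sop (f : ℂ → ℂ) : ℂ → ℂ := fun ω => (starRingEnd ℂ) (f (-(starRingEnd ℂ) ω))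

/-! ### The kernel and the weighted spectral measure -/

/-- The unnormalised Cauchy density `x ↦ 1 / (x² + δ²)`; it dominates `1 / |a - ζ|²` at
`ζ = (x + a) + iy` for real `a` and `y ≥ δ`. -/
def cauchyDens (δ x : ℝ) : ℝ := (x ^ 2 + δ ^ 2)⁻¹

/-- The kernel `q(ζ, λ) = (1 + λ) / (ζ (λ - ζ²))`, where `ζ = ω + ih`; the factor `1 + λ`
compensates the density of `starMeas`. -/
def qker (z : ℂ) (l : ℝ) : ℂ := (1 + (l : ℂ)) / (z * ((l : ℂ) - z ^ 2))

/-- The measure `dσ(λ)/(λ+1)` on `[0,∞)`, whose total mass is `‖σ‖_*`. -/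
def starMeas (σ : Measure ℝ) : Measure ℝ :=
  (σ.restrict (Ici 0)).withDensity fun l => ENNReal.ofReal (1 / (l + 1))

lemma starMeas_univ (σ : Measure ℝ) :
    starMeas σ univ = ∫⁻ l in Ici (0:ℝ), ENNReal.ofReal (1 / (l + 1)) ∂σ := by
  rw [starMeas, withDensity_apply _ MeasurableSet.univ, Measure.restrict_univ]

lemma starMeas_real (σ : Measure ℝ) : (starMeas σ).real univ = starNorm σ := by
  rw [Measure.real, starMeas_univ, starNorm]

lemma isFiniteMeasure_starMeas {σ : Measure ℝ} (hσ : FinCond σ) :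
    IsFiniteMeasure (starMeas σ) := ⟨by rw [starMeas_univ]; exact hσ⟩

lemma ae_starMeas_nonneg (σ : Measure ℝ) : ∀ᵐ l ∂(starMeas σ), 0 ≤ l :=
  (withDensity_absolutelyContinuous _ _).ae_le (ae_restrict_mem measurableSet_Ici)

lemma sInt_div_eq (h : ℝ) (σ : Measure ℝ) (ω : ℂ) :
    sInt h σ ω / (ω + I * (h:ℂ)) = ∫ l, qker (ω + I * (h:ℂ)) l ∂(starMeas σ) := by
  set z := ω + I * (h:ℂ) with hz
  have hd : Measurable fun l : ℝ => (1 / (l + 1)).toNNReal := by fun_prop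
  have := integral_withDensity_eq_integral_smul (μ := σ.restrict (Ici 0)) hd (fun l => qker z l)
  change ∫ l, qker z l ∂(starMeas σ) = _ at this
  rw [this, sInt, ← hz, div_eq_mul_inv, ← integral_mul_const]
  refine setIntegral_congr_fun measurableSet_Ici fun l (hl : 0 ≤ l) => ?_
  have h1 : (l:ℂ) + 1 ≠ 0 := by
    exact_mod_cast (by positivity : l + 1 ≠ 0)
  simp only [NNReal.smul_def, Real.coe_toNNReal _ (by positivity : 0 ≤ 1 / (l + 1)), qker]
  rw [Complex.real_smul]
  push_cast
  rw [add_comm (1:ℂ), mul_div_assoc', one_div, inv_mul_cancel₀ h1, one_div, mul_inv, mul_comm]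

/-! ### Pointwise bounds on the kernel -/

lemma sub_ne {z : ℂ} {s : ℝ} (hz : 0 < z.im) : (s:ℂ) - z ≠ 0 := by
  intro h
  have := congrArg Complex.im h
  simp at this
  linarith

lemma norm_sub_lb {δ : ℝ} {z : ℂ} (s : ℝ) (hz : δ ≤ z.im) : δ ≤ ‖(s:ℂ) - z‖ := by
  have := Complex.abs_im_le_norm ((s:ℂ) - z)
  simp only [sub_im, ofReal_im, zero_sub, abs_neg] at this
  exact (hz.trans (le_abs_self _)).trans this

lemma norm_sub_inv_sq_le {δ : ℝ} {z : ℂ} (s : ℝ) (hδ : 0 < δ) (hz : δ ≤ z.im) :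
    (‖(s:ℂ) - z‖⁻¹) ^ 2 ≤ cauchyDens δ (z.re - s) := by
  rw [inv_pow, cauchyDens, Complex.sq_norm, Complex.normSq_apply]
  apply inv_anti₀ (by positivity)
  simp only [sub_re, ofReal_re, sub_im, ofReal_im]
  nlinarith

/-- The partial fraction expansion `λ / (ζ (λ - ζ²)) = 1/ζ + (1/(√λ - ζ) - 1/(√λ + ζ))/2`
makes every summand square integrable along horizontal lines, uniformly in `λ`. -/
lemma norm_qker_le {δ : ℝ} {z : ℂ} {l : ℝ} (hδ : 0 < δ) (hz : δ ≤ z.im) (hl : 0 ≤ l) :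
    ‖qker z l‖ ≤ (δ⁻¹ ^ 2 + 1) * ‖((0:ℝ):ℂ) - z‖⁻¹
      + 2⁻¹ * ‖((√l : ℝ):ℂ) - z‖⁻¹ + 2⁻¹ * ‖((-√l : ℝ):ℂ) - z‖⁻¹ := by
  have hz0 : 0 < z.im := hδ.trans_le hz
  set s := √l with hs
  have hsl : (l:ℂ) = (s:ℂ) ^ 2 := by rw [← ofReal_pow, hs, Real.sq_sqrt hl]
  have n0 : ((0:ℝ):ℂ) - z ≠ 0 := sub_ne hz0
  have n1 : ((s:ℝ):ℂ) - z ≠ 0 := sub_ne hz0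
  have n2 : ((-s:ℝ):ℂ) - z ≠ 0 := sub_ne hz0
  have e : qker z l = ((((0:ℝ):ℂ) - z)⁻¹ * ((((s:ℝ):ℂ) - z)⁻¹ * (((-s:ℝ):ℂ) - z)⁻¹)
      + -(((0:ℝ):ℂ) - z)⁻¹) + 2⁻¹ * (((s:ℝ):ℂ) - z)⁻¹ + 2⁻¹ * (((-s:ℝ):ℂ) - z)⁻¹ := by
    have n3 : z ≠ 0 := by simpa using n0
    have n4 : -(s:ℂ) - z ≠ 0 := by simpa using n2
    have n5 : (s:ℂ) ^ 2 - z ^ 2 ≠ 0 := by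
      have : (s:ℂ) ^ 2 - z ^ 2 = -(((s:ℂ) - z) * (-(s:ℂ) - z)) := by ring
      rw [this]; exact neg_ne_zero.2 (mul_ne_zero n1 n4)
    rw [qker, hsl]
    push_cast
    rw [zero_sub]
    field_simp
    ring
  have b1 : ‖((s:ℝ):ℂ) - z‖⁻¹ ≤ δ⁻¹ := inv_anti₀ hδ (norm_sub_lb _ hz)
  have b2 : ‖((-s:ℝ):ℂ) - z‖⁻¹ ≤ δ⁻¹ := inv_anti₀ hδ (norm_sub_lb _ hz)
  have t2 : ‖(2:ℂ)‖ = 2 := by simp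
  rw [e]
  refine (norm_add₃_le).trans ?_
  rw [norm_mul, norm_mul, norm_inv, norm_inv, norm_inv, t2]
  gcongr
  refine (norm_add_le _ _).trans ?_
  rw [norm_neg, norm_mul, norm_mul, norm_inv, norm_inv, norm_inv, add_mul, one_mul]
  gcongr ?_ + _
  rw [mul_comm, sq]
  gcongr

lemma norm_qker_le_const {δ : ℝ} {z : ℂ} {l : ℝ} (hδ : 0 < δ) (hz : δ ≤ z.im) (hl : 0 ≤ l) :
    ‖qker z l‖ ≤ (δ⁻¹ ^ 2 + 1) * δ⁻¹ + 2⁻¹ * δ⁻¹ + 2⁻¹ * δ⁻¹ := by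
  refine (norm_qker_le hδ hz hl).trans ?_
  gcongr <;> exact norm_sub_lb _ hz

lemma norm_qker_sq_le {δ : ℝ} {z : ℂ} {l : ℝ} (hδ : 0 < δ) (hz : δ ≤ z.im) (hl : 0 ≤ l) :
    ‖qker z l‖ ^ 2 ≤ 3 * (δ⁻¹ ^ 2 + 1) ^ 2 * cauchyDens δ z.re
      + cauchyDens δ (z.re - √l) + cauchyDens δ (z.re + √l) := by
  have h0 := norm_sub_inv_sq_le 0 hδ hz
  have h1 := norm_sub_inv_sq_le (√l) hδ hz
  have h2 := norm_sub_inv_sq_le (-√l) hδ hz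
  rw [sub_zero] at h0
  rw [sub_neg_eq_add] at h2
  have h := norm_qker_le hδ hz hl
  set a := ‖((0:ℝ):ℂ) - z‖⁻¹
  set b := ‖((√l:ℝ):ℂ) - z‖⁻¹
  set d := ‖((-√l:ℝ):ℂ) - z‖⁻¹
  set k := δ⁻¹ ^ 2 + 1
  have hsq : ‖qker z l‖ ^ 2 ≤ (k * a + 2⁻¹ * b + 2⁻¹ * d) ^ 2 := by gcongr
  have h0' : 3 * k ^ 2 * a ^ 2 ≤ 3 * k ^ 2 * cauchyDens δ z.re := by gcongr
  nlinarith [sq_nonneg (k * a - 2⁻¹ * b), sq_nonneg (k * a - 2⁻¹ * d), sq_nonneg (b - d),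
    sq_nonneg b, sq_nonneg d]

lemma measurable_qker : Measurable fun p : ℂ × ℝ => qker p.1 p.2 := by
  unfold qker; fun_prop

lemma integrable_qker {δ : ℝ} {z : ℂ} {σ : Measure ℝ} (hσ : FinCond σ) (hδ : 0 < δ)
    (hz : δ ≤ z.im) : Integrable (qker z) (starMeas σ) := by
  have := isFiniteMeasure_starMeas hσ
  refine Integrable.of_bound
    (measurable_qker.comp measurable_prodMk_left).aestronglyMeasurable
    ((δ⁻¹ ^ 2 + 1) * δ⁻¹ + 2⁻¹ * δ⁻¹ + 2⁻¹ * δ⁻¹) ?_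
  filter_upwards [ae_starMeas_nonneg σ] with l hl
  exact norm_qker_le_const hδ hz hl

/-! ### The upper bound on horizontal lines -/

lemma cauchyDens_nonneg (δ x : ℝ) : 0 ≤ cauchyDens δ x := by unfold cauchyDens; positivity

lemma measurable_cauchyDens (δ : ℝ) : Measurable (cauchyDens δ) := by
  unfold cauchyDens; fun_prop

lemma integrable_cauchyDens {δ : ℝ} (hδ : 0 < δ) : Integrable (cauchyDens δ) := by
  have h := (integrable_inv_one_add_sq.comp_div hδ.ne').const_mul (δ⁻¹ ^ 2)
  refine h.congr (Eventually.of_forall fun x => ?_)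
  simp only [cauchyDens]
  rw [inv_pow, ← mul_inv]
  congr 1
  field_simp
  ring

/-- The constant bounding `∫ |q(x + iy, λ)|² dx` uniformly in `λ ≥ 0` and `y ≥ δ`. -/
def lineConst (δ : ℝ) : ℝ := (3 * (δ⁻¹ ^ 2 + 1) ^ 2 + 1 + 1) * ∫ x, cauchyDens δ x

lemma lineConst_nonneg (δ : ℝ) : 0 ≤ lineConst δ :=
  mul_nonneg (by positivity) (integral_nonneg (cauchyDens_nonneg δ))

lemma lintegral_qker_sq_le {δ y l : ℝ} (hδ : 0 < δ) (hy : δ ≤ y) (hl : 0 ≤ l) :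
    ∫⁻ x : ℝ, ‖qker ((x:ℂ) + I * (y:ℂ)) l‖ₑ ^ 2 ≤ ENNReal.ofReal (lineConst δ) := by
  have i0 := integrable_cauchyDens hδ
  have i0' := i0.const_mul (3 * (δ⁻¹ ^ 2 + 1) ^ 2)
  have i1 := i0.comp_sub_right (√l)
  have i2 := i0.comp_add_right (√l)
  calc ∫⁻ x : ℝ, ‖qker ((x:ℂ) + I * (y:ℂ)) l‖ₑ ^ 2
      ≤ ∫⁻ x : ℝ, ENNReal.ofReal (3 * (δ⁻¹ ^ 2 + 1) ^ 2 * cauchyDens δ x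
          + cauchyDens δ (x - √l) + cauchyDens δ (x + √l)) := by
        refine lintegral_mono fun x => ?_
        have h := norm_qker_sq_le (z := (x:ℂ) + I * (y:ℂ)) hδ (by simpa using hy) hl
        simp only [add_re, ofReal_re, mul_re, I_re, zero_mul, I_im, ofReal_im, mul_zero,
          sub_zero, add_zero] at h
        rw [← ofReal_norm, ← ENNReal.ofReal_pow (norm_nonneg _)]
        exact ENNReal.ofReal_le_ofReal h
    _ = ENNReal.ofReal (lineConst δ) := by
        refine (ofReal_integral_eq_lintegral_ofReal ((i0'.add i1).add i2)
          (Eventually.of_forall fun x => ?_)).symm.trans ?_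
        rotate_left
        · congr 1
          rw [integral_add' (i0'.add i1) i2, integral_add' i0' i1, integral_const_mul,
            integral_sub_right_eq_self, integral_add_right_eq_self, lineConst]
          ring
        · have a := cauchyDens_nonneg δ
          have b := a x
          have c := a (x - √l)
          have d := a (x + √l)
          simp only [Pi.zero_apply, Pi.add_apply]
          positivity

/-- Cauchy–Schwarz against the constant function `1`. -/
lemma sq_lintegral_le {μ : Measure ℝ} {u : ℝ → ENNReal} (hu : AEMeasurable u μ) :
    (∫⁻ l, u l ∂μ) ^ 2 ≤ μ univ * ∫⁻ l, u l ^ 2 ∂μ := by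
  have h := ENNReal.lintegral_mul_le_Lp_mul_Lq μ Real.HolderConjugate.two_two
    (aemeasurable_const (b := (1:ENNReal))) hu
  simp only [Pi.mul_apply, one_mul, ENNReal.one_rpow, lintegral_const] at h
  have h2 := pow_le_pow_left' h 2
  rw [mul_pow, ← ENNReal.rpow_natCast, ← ENNReal.rpow_natCast (_ ^ _), ← ENNReal.rpow_natCast (_ ^ _),
    ← ENNReal.rpow_mul, ← ENNReal.rpow_mul] at h2
  simpa using h2

/-- Minkowski-type bound: Cauchy–Schwarz in `λ` followed by Tonelli. -/
lemma lintegral_sq_le {δ y : ℝ} {σ : Measure ℝ} (hσ : FinCond σ) (hδ : 0 < δ) (hy : δ ≤ y) :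
    ∫⁻ x : ℝ, ‖∫ l, qker ((x:ℂ) + I * (y:ℂ)) l ∂(starMeas σ)‖ₑ ^ 2
      ≤ ENNReal.ofReal (lineConst δ * starNorm σ ^ 2) := by
  have := isFiniteMeasure_starMeas hσ
  set μ := starMeas σ
  have hm : Measurable fun p : ℝ × ℝ => ‖qker ((p.1:ℂ) + I * (y:ℂ)) p.2‖ₑ ^ 2 :=
    ((measurable_qker.comp (f := fun p : ℝ × ℝ => ((p.1:ℂ) + I * (y:ℂ), p.2))
      (by fun_prop)).enorm).pow_const 2
  calc ∫⁻ x : ℝ, ‖∫ l, qker ((x:ℂ) + I * (y:ℂ)) l ∂μ‖ₑ ^ 2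
      ≤ ∫⁻ x : ℝ, μ univ * ∫⁻ l, ‖qker ((x:ℂ) + I * (y:ℂ)) l‖ₑ ^ 2 ∂μ := by
        refine lintegral_mono fun x => ?_
        refine (pow_le_pow_left' (enorm_integral_le_lintegral_enorm _) 2).trans ?_
        exact sq_lintegral_le
          (measurable_qker.comp measurable_prodMk_left).enorm.aemeasurable
    _ = μ univ * ∫⁻ l, (∫⁻ x : ℝ, ‖qker ((x:ℂ) + I * (y:ℂ)) l‖ₑ ^ 2) ∂μ := by
        rw [lintegral_const_mul' _ _ (measure_ne_top _ _),
          lintegral_lintegral_swap hm.aemeasurable]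
    _ ≤ μ univ * ∫⁻ _l, ENNReal.ofReal (lineConst δ) ∂μ := by
        refine mul_le_mul_right (lintegral_mono_ae ?_) _
        filter_upwards [ae_starMeas_nonneg σ] with l hl
        exact lintegral_qker_sq_le hδ hy hl
    _ = ENNReal.ofReal (lineConst δ * starNorm σ ^ 2) := by
        rw [lintegral_const, ← starMeas_real, ENNReal.ofReal_mul (lineConst_nonneg δ),
          ENNReal.ofReal_pow measureReal_nonneg, ofReal_measureReal]
        ring

/-! ### The lower bound near the imaginary axis -/

/-- On the short segment `0 < x < δ/2` of the line `Im ζ = δ` one has `Re (λ - ζ²) > 0`, so the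
integrand of `f` has positive real part, of size comparable to `1/(λ+1)`. -/
lemma re_mul_qker_ge {δ x l : ℝ} (hδ : 0 < δ) (hx : x ∈ Ioo 0 (δ / 2)) (hl : 0 ≤ l) :
    (1 + 3 * δ ^ 2)⁻¹ ≤ (((x:ℂ) + I * (δ:ℂ)) * qker ((x:ℂ) + I * (δ:ℂ)) l).re := by
  obtain ⟨hx0, hx1⟩ := hx
  have hz : (x:ℂ) + I * (δ:ℂ) ≠ 0 := by
    intro h
    have := congrArg Complex.im h
    simp at this
    exact hδ.ne' this
  have hx2 : x ^ 2 ≤ δ ^ 2 / 4 := by nlinarith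
  set a := l - x ^ 2 + δ ^ 2 with ha
  set b := 2 * x * δ with hb
  have ha1 : 3 / 4 * δ ^ 2 ≤ a := by linarith
  have ha0 : 0 < a := lt_of_lt_of_le (by positivity) ha1
  have hb2 : b ^ 2 ≤ δ ^ 2 * δ ^ 2 := by
    have : b ^ 2 = 4 * x ^ 2 * δ ^ 2 := by rw [hb]; ring
    rw [this]
    gcongr
    linarith
  have e : ((x:ℂ) + I * (δ:ℂ)) * qker ((x:ℂ) + I * (δ:ℂ)) l
      = ((1 + l : ℝ) : ℂ) * (⟨a, -b⟩ : ℂ)⁻¹ := by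
    have : (⟨a, -b⟩ : ℂ) = (l:ℂ) - ((x:ℂ) + I * (δ:ℂ)) ^ 2 := by
      apply Complex.ext <;> simp [sq, ha, hb] <;> ring
    rw [this, qker, mul_div_assoc', mul_div_mul_left _ _ hz, div_eq_mul_inv]
    push_cast
    ring
  rw [e, re_ofReal_mul, inv_re, normSq_mk, inv_eq_one_div, mul_div_assoc',
    div_le_div_iff₀ (by positivity) (by nlinarith [sq_nonneg b])]
  have h1 : a * a + b ^ 2 ≤ (l + 3 * δ ^ 2) * a := by
    nlinarith [mul_le_mul_of_nonneg_left ha1 (sq_nonneg δ), mul_nonneg (sq_nonneg x) ha0.le,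
      mul_nonneg (sq_nonneg δ) (sq_nonneg δ)]
  have h2 : (l + 3 * δ ^ 2) * a ≤ (1 + l) * (1 + 3 * δ ^ 2) * a := by
    gcongr
    nlinarith [mul_nonneg hl (sq_nonneg δ)]
  nlinarith

lemma norm_integral_qker_ge {δ x : ℝ} {σ : Measure ℝ} (hσ : FinCond σ) (hδ : 0 < δ)
    (hx : x ∈ Ioo 0 (δ / 2)) :
    (1 + 3 * δ ^ 2)⁻¹ / (2 * δ) * starNorm σ
      ≤ ‖∫ l, qker ((x:ℂ) + I * (δ:ℂ)) l ∂(starMeas σ)‖ := by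
  have := isFiniteMeasure_starMeas hσ
  set z := (x:ℂ) + I * (δ:ℂ) with hz
  have hzi : δ ≤ z.im := by simp [hz]
  have hzn : ‖z‖ ≤ 2 * δ := by
    refine (Complex.norm_le_abs_re_add_abs_im z).trans ?_
    have h1 : z.re = x := by simp [hz]
    have h2 : z.im = δ := by simp [hz]
    rw [h1, h2, abs_of_pos hx.1, abs_of_pos hδ]
    linarith [hx.2]
  have hint := (integrable_qker hσ hδ hzi).const_mul z
  have h1 : (1 + 3 * δ ^ 2)⁻¹ * starNorm σ ≤ ∫ l, (z * qker z l).re ∂(starMeas σ) := by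
    calc (1 + 3 * δ ^ 2)⁻¹ * starNorm σ = ∫ _l, (1 + 3 * δ ^ 2)⁻¹ ∂(starMeas σ) := by
          rw [integral_const, starMeas_real, smul_eq_mul, mul_comm]
      _ ≤ _ := by
          refine integral_mono_ae (integrable_const _) hint.re ?_
          filter_upwards [ae_starMeas_nonneg σ] with l hl
          exact re_mul_qker_ge hδ hx hl
  have h2 : ∫ l, (z * qker z l).re ∂(starMeas σ) = (z * ∫ l, qker z l ∂(starMeas σ)).re := by
    rw [← integral_const_mul]
    exact integral_re hint
  have h3 : (z * ∫ l, qker z l ∂(starMeas σ)).re ≤ 2 * δ * ‖∫ l, qker z l ∂(starMeas σ)‖ := by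
    refine (Complex.re_le_norm _).trans ?_
    rw [norm_mul]
    gcongr
  rw [div_mul_eq_mul_div, div_le_iff₀ (by positivity)]
  linarith

/-! ### Comparison of the norms -/

/-- For `0 < h' < h` and `f ∈ K_h` with spectral measure `σ`, the function
`ω ↦ f(ω)/(ω + ih)` belongs to `H²(ℍ_{h'})` and its `H²(ℍ_{h'})` norm is comparable to
`‖σ‖_*`, with constants depending only on `h - h'`. -/
theorem h_prime_norm_equivalence :
    ∀ δ : ℝ, 0 < δ → ∃ c C : ℝ, 0 < c ∧ 0 < C ∧
      ∀ h h' : ℝ, 0 < h' → h' < h → h - h' = δ →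
        ∀ (f : ℂ → ℂ) (σ : Measure ℝ), MemK h f → FinCond σ →
          (∀ ω ∈ Hh h, f ω = sInt h σ ω) →
          MemH2 h' (fun ω => f ω / (ω + I * (h:ℂ))) ∧
          c * starNorm σ ≤ H2norm h' (fun ω => f ω / (ω + I * (h:ℂ))) ∧
          H2norm h' (fun ω => f ω / (ω + I * (h:ℂ))) ≤ C * starNorm σ := by
  intro δ hδ
  refine ⟨√(δ / 2) * ((1 + 3 * δ ^ 2)⁻¹ / (2 * δ)), √(lineConst δ) + 1, by positivity,
    by positivity, ?_⟩
  intro h h' _ hh' hδe f σ hf hσ hfσ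
  set F : ℂ → ℂ := fun ω => f ω / (ω + I * (h:ℂ)) with hF
  have hN : 0 ≤ starNorm σ := ENNReal.toReal_nonneg
  have hsub : HhC h' ⊆ Hh h := fun ω (hω : -h' ≤ ω.im) => by
    change -h < ω.im
    linarith
  have hdiff : DifferentiableOn ℂ F (Hh h) := by
    refine hf.1.div (by fun_prop) fun ω (hω : -h < ω.im) h0 => ?_
    have := congrArg Complex.im h0
    simp at this
    linarith
  have hline : ∀ y : ℝ, -h' ≤ y → ∀ x : ℝ, F ((x:ℂ) + I * (y:ℂ))
      = ∫ l, qker ((x:ℂ) + I * ((y + h : ℝ):ℂ)) l ∂(starMeas σ) := by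
    intro y hy x
    have hm : (x:ℂ) + I * (y:ℂ) ∈ Hh h := hsub (by simpa [HhC] using hy)
    simp only [hF]
    rw [hfσ _ hm, sInt_div_eq]
    congr 3
    funext l
    congr 1
    push_cast
    ring
  have hcont : ∀ y : ℝ, -h' ≤ y → Continuous fun x : ℝ => F ((x:ℂ) + I * (y:ℂ)) := fun y hy =>
    (hdiff.continuousOn.mono hsub).comp_continuous (by fun_prop) fun x => by simpa [HhC] using hy
  have hlint : ∀ y : ℝ, -h' ≤ y → ∫⁻ x : ℝ, ENNReal.ofReal (‖F ((x:ℂ) + I * (y:ℂ))‖ ^ 2)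
      ≤ ENNReal.ofReal (lineConst δ * starNorm σ ^ 2) := by
    intro y hy
    refine le_trans (le_of_eq ?_) (lintegral_sq_le (y := y + h) hσ hδ (by linarith))
    refine lintegral_congr fun x => ?_
    rw [hline y hy x, ENNReal.ofReal_pow (norm_nonneg _), ofReal_norm]
  have hm : ∀ y : ℝ, -h' ≤ y → Continuous fun x : ℝ => ‖F ((x:ℂ) + I * (y:ℂ))‖ ^ 2 :=
    fun y hy => (hcont y hy).norm.pow 2
  have hint : ∀ y : ℝ, -h' ≤ y → ∫ x : ℝ, ‖F ((x:ℂ) + I * (y:ℂ))‖ ^ 2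
      ≤ lineConst δ * starNorm σ ^ 2 := by
    intro y hy
    rw [integral_eq_lintegral_of_nonneg_ae (Eventually.of_forall fun x => by positivity)
      (hm y hy).aestronglyMeasurable]
    exact ENNReal.toReal_le_of_le_ofReal
      (mul_nonneg (lineConst_nonneg δ) (sq_nonneg _)) (hlint y hy)
  -- `H2norm` parametrizes the boundary as `x - ih'`, `MemH2` writes lines as `x + iy`.
  have hbd : ∀ x : ℝ, (x:ℂ) - I * (h':ℂ) = (x:ℂ) + I * ((-h' : ℝ):ℂ) := fun x => by
    push_cast; ring
  have hnorm : H2norm h' F = √(∫ x : ℝ, ‖F ((x:ℂ) + I * ((-h' : ℝ):ℂ))‖ ^ 2) := by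
    simp only [H2norm, hbd]
  refine ⟨⟨hdiff.mono fun ω (hω : -h' < ω.im) => hsub hω.le, hdiff.continuousOn.mono hsub,
    lineConst δ * starNorm σ ^ 2, hint⟩, ?_, ?_⟩
  -- The Bochner integral is `0` for non-integrable functions, so integrability is needed here.
  · have hI : Integrable fun x : ℝ => ‖F ((x:ℂ) + I * ((-h' : ℝ):ℂ))‖ ^ 2 := by
      refine ⟨(hm _ le_rfl).aestronglyMeasurable, ?_⟩
      rw [hasFiniteIntegral_iff_ofReal (Eventually.of_forall fun x => by positivity)]
      exact (hlint _ le_rfl).trans_lt ENNReal.ofReal_lt_top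
    set c := (1 + 3 * δ ^ 2)⁻¹ / (2 * δ)
    have hc : 0 ≤ c := by positivity
    rw [hnorm]
    apply Real.le_sqrt_of_sq_le
    calc (√(δ / 2) * c * starNorm σ) ^ 2 = ∫ _x in Ioo (0:ℝ) (δ / 2), (c * starNorm σ) ^ 2 := by
          rw [setIntegral_const, Real.volume_real_Ioo_of_le (by positivity), sub_zero,
            smul_eq_mul, mul_assoc, mul_pow, Real.sq_sqrt (by positivity)]
      _ ≤ ∫ x in Ioo (0:ℝ) (δ / 2), ‖F ((x:ℂ) + I * ((-h' : ℝ):ℂ))‖ ^ 2 := by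
          refine setIntegral_mono_on (integrableOn_const (by simp)) hI.integrableOn
            measurableSet_Ioo fun x hx => ?_
          have e : -h' + h = δ := by linarith
          rw [hline _ le_rfl x, e]
          gcongr
          exact norm_integral_qker_ge hσ hδ hx
      _ ≤ _ := setIntegral_le_integral hI (Eventually.of_forall fun x => by positivity)
  · rw [hnorm]
    refine (Real.sqrt_le_sqrt (hint _ le_rfl)).trans ?_
    rw [Real.sqrt_mul (lineConst_nonneg δ), Real.sqrt_sq hN]
    nlinarith
end
end
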